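/- arXiv:1804.11016 — 2 statements merged into one kernel-verified Lean document; each statement's English description precedes it below -/
import Mathlib

section
/- For every m ∈ ℕ with m ≥ 1 and every closed interval I = [b₁,b₂] ⊆ [0,1] with rational endpoints, the set B_{m,I} = ⋃_{n∈ℕ} A_{n,m,I} is open and dense in the metric space (F_(C,β), d_α). -/
open MeasureTheory Set Filter Topology
open scoped ENNReal

noncomputable section

/-- The unit square `M = [0,1]²`. -/
def MSq : Set (ℝ × ℝ) := unitInterval ×ˢ unitInterval

/-- Lower `(C,γ)`-bi-Hölder bound in the second variable. -/
def BiHolderLower (C γ : ℝ) (f : ℝ → ℝ → ℝ) : Prop :=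
  ∀ x ∈ unitInterval, ∀ y₁ ∈ unitInterval, ∀ y₂ ∈ unitInterval, y₁ ≠ y₂ →
    C⁻¹ * |y₂ - y₁| ^ (1 / γ) ≤ |f x y₂ - f x y₁|

/-- Upper `(C,γ)`-Hölder bound in the second variable. -/
def BiHolderUpper (C γ : ℝ) (f : ℝ → ℝ → ℝ) : Prop :=
  ∀ x ∈ unitInterval, ∀ y₁ ∈ unitInterval, ∀ y₂ ∈ unitInterval, y₁ ≠ y₂ →
    |f x y₂ - f x y₁| ≤ C * |y₂ - y₁| ^ γ

/-- Membership in the space `F_(C,γ)`: conditions (i)–(iv); `fx` plays the role of `∂f/∂x`. -/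
structure IsFol (C γ : ℝ) (f fx : ℝ → ℝ → ℝ) : Prop where
  mapsTo : ∀ x ∈ unitInterval, ∀ y ∈ unitInterval, f x y ∈ unitInterval
  hasDeriv : ∀ y ∈ unitInterval, ∀ x ∈ unitInterval,
    HasDerivWithinAt (fun x' => f x' y) (fx x y) unitInterval x
  derivCont : ContinuousOn (fun p : ℝ × ℝ => fx p.1 p.2) MSq
  eq_id : ∀ y ∈ unitInterval, f 0 y = y
  eq_bot : ∀ x ∈ unitInterval, f x 0 = 0
  eq_top : ∀ x ∈ unitInterval, f x 1 = 1
  lower : BiHolderLower C γ f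
  upper : BiHolderUpper C γ f

/-- The space `F_(C,γ)`. -/
structure Fol (C γ : ℝ) where
  f : ℝ → ℝ → ℝ
  fx : ℝ → ℝ → ℝ
  isFol : IsFol C γ f fx

/-- The inverse of `y ↦ f x y` on `[0,1]`, i.e. the holonomy `h^f_{x,0}`. -/
def hinv (f : ℝ → ℝ → ℝ) (x : ℝ) : ℝ → ℝ := Function.invFunOn (f x) unitInterval

/-- The `C⁰` distance over the square. -/
def C0dist (u v : ℝ → ℝ → ℝ) : ℝ :=
  sSup {r | ∃ x ∈ unitInterval, ∃ y ∈ unitInterval, r = |u x y - v x y|}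

/-- The `α`-Hölder seminorm of the difference `h - k` on `[0,1]`. -/
def holDist (α : ℝ) (h k : ℝ → ℝ) : ℝ :=
  sSup {r | ∃ y₁ ∈ unitInterval, ∃ y₂ ∈ unitInterval, y₁ ≠ y₂ ∧
    r = |(h y₂ - k y₂) - (h y₁ - k y₁)| / |y₂ - y₁| ^ α}

/-- The distance `d_α`, on raw data `(f, ∂f/∂x)`, `(g, ∂g/∂x)`. -/
def dalpha (α : ℝ) (f fx g gx : ℝ → ℝ → ℝ) : ℝ :=
  C0dist f g + C0dist fx gx +
    sSup {r | ∃ x ∈ unitInterval,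
      r = max (holDist α (f x) (g x)) (holDist α (hinv f x) (hinv g x))}

/-- The distance `d_α` on `F_(C,γ)`. -/
def dalphaF {C γ : ℝ} (α : ℝ) (F G : Fol C γ) : ℝ := dalpha α F.f F.fx G.f G.fx

/-- Openness with respect to a distance function. -/
def IsOpenWrt {X : Type*} (d : X → X → ℝ) (s : Set X) : Prop :=
  ∀ f ∈ s, ∃ ε > 0, ∀ g, d g f < ε → g ∈ s

/-- Density with respect to a distance function. -/
def IsDenseWrt {X : Type*} (d : X → X → ℝ) (s : Set X) : Prop :=
  ∀ f : X, ∀ ε > 0, ∃ g ∈ s, d g f < ε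

/-- Lebesgue measure `μ` on the unit square `M`. -/
def muM : Measure (ℝ × ℝ) := volume.restrict MSq

/-- The projection `π_f(x,z) = f(x,·)⁻¹(z)` along the leaves. -/
def projF (f : ℝ → ℝ → ℝ) : ℝ × ℝ → ℝ := fun p => hinv f p.1 p.2

/-- The quotient measure `μ̂ = (π_f)_* μ`. -/
def quotM {C γ : ℝ} (F : Fol C γ) : Measure ℝ := muM.map (projF F.f)

/-- The leaf `L_y = {(x, f(x,y)) : x ∈ [0,1]}`. -/
def Leaf {C γ : ℝ} (F : Fol C γ) (y : ℝ) : Set (ℝ × ℝ) :=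
  (fun x => (x, F.f x y)) '' unitInterval

/-- `(ν_y)` is a Rokhlin disintegration of Lebesgue measure on the square w.r.t. `π_f`. -/
def IsDisint {C γ : ℝ} (F : Fol C γ) (ν : ℝ → Measure (ℝ × ℝ)) : Prop :=
  (∀ y, IsProbabilityMeasure (ν y)) ∧
  (∀ E : Set (ℝ × ℝ), MeasurableSet E → Measurable fun y => ν y E) ∧
  (∀ᵐ y ∂quotM F, ν y (Leaf F y) = 1) ∧
  (∀ E : Set (ℝ × ℝ), MeasurableSet E → muM E = ∫⁻ y, ν y E ∂quotM F)

/-- The element `P_i` of the partition `P_{f,n}`. -/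
def Pelt (f : ℝ → ℝ → ℝ) (n i : ℕ) : Set (ℝ × ℝ) :=
  {p | p.1 ∈ unitInterval ∧ f p.1 ((i : ℝ) / 2 ^ n) ≤ p.2 ∧ p.2 < f p.1 (((i : ℝ) + 1) / 2 ^ n)}

/-- `Ĩ = [b₁,b₂] × [0,1]`. -/
def Itilde (b₁ b₂ : ℝ) : Set (ℝ × ℝ) := Icc b₁ b₂ ×ˢ unitInterval

/-- The set `A_{n,m,I}`. -/
def Aset (C γ : ℝ) (n m : ℕ) (b₁ b₂ : ℝ) : Set (Fol C γ) :=
  {F | ∀ i < 2 ^ n,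
    muM (Pelt F.f n i ∩ Itilde b₁ b₂) / muM (Pelt F.f n i) < 1 / (m : ℝ≥0∞) ∨
    1 - 1 / (m : ℝ≥0∞) < muM (Pelt F.f n i ∩ Itilde b₁ b₂) / muM (Pelt F.f n i)}

/-- The set `B_{m,I}`. -/
def Bset (C γ : ℝ) (m : ℕ) (b₁ b₂ : ℝ) : Set (Fol C γ) := ⋃ n : ℕ, Aset C γ n m b₁ b₂

/-- The leaf measure `λ_y`: pushforward of 1-dimensional Lebesgue measure on `[0,1]`
under `x ↦ (x, f(x,y))`. -/
def leafMeas {C γ : ℝ} (F : Fol C γ) (y : ℝ) : Measure (ℝ × ℝ) :=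
  (volume.restrict unitInterval).map fun x => (x, F.f x y)

/-!
Openness: the area over `J` of an element of `P_{f,n}` is the integral over `J` of its height
`f(x,(i+1)/2ⁿ) - f(x,i/2ⁿ)`, which depends continuously on `f` in the `C⁰` norm, so `A_{n,m,I}` is
cut out by finitely many open conditions.

Density: `C¹` closeness in `x` controls `d_α`, because the Hölder terms interpolate between the
`C⁰` distance and the `β`-Hölder bounds. Mixing `f` with the trivial foliation makes the bi-Hölder
bounds strict. Now subdivide `[0,1]` in the transversal direction into `N` cells so short that
replacing `f(x,·)` by its interpolation hardly moves `∂f/∂x`, and add in each cell `σ(x)` times a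
zigzag of `2L` pieces with slopes `±1`. For large `L` this is `C¹`-small in `x`, and it respects the
bi-Hölder bounds: at small scales the perturbed map is bi-Lipschitz, at large scales it is close to
the unperturbed one. A zigzag piece has its height multiplied by `1 ± σ(x)`, whatever `L` is. If `σ`
is `C¹` with `σ(0) = 0`, close to `1` on `I` and to `-1` off `I`, then every element of the refined
partition has almost none of its area over `I`, or almost none of it off `I`.
-/

/-! ### Bi-Hölder foliations -/

/-- The increasing version of condition (iv): `v` is increasing and `(C,β)`-bi-Hölder on `[0,1]`.
Both bounds are phrased with signed increments, so that they pass to sums. -/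
def BiHolderMono (C β : ℝ) (v : ℝ → ℝ) : Prop :=
  ∀ ⦃y⦄, y ∈ unitInterval → ∀ ⦃z⦄, z ∈ unitInterval → y ≤ z →
    C⁻¹ * (z - y) ^ (1 / β) ≤ v z - v y ∧ v z - v y ≤ C * (z - y) ^ β

namespace BiHolderMono

variable {C β : ℝ} {v : ℝ → ℝ} {y z : ℝ}

lemma strictMonoOn (hC : 0 < C) (hv : BiHolderMono C β v) : StrictMonoOn v unitInterval := by
  intro y hy z hz hyz
  have hpos : 0 < C⁻¹ * (z - y) ^ (1 / β) :=
    mul_pos (inv_pos.2 hC) (Real.rpow_pos_of_pos (sub_pos.2 hyz) _)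
  linarith [(hv hy hz hyz.le).1]

lemma abs_sub_le (hC : 0 < C) (hv : BiHolderMono C β v) (hy : y ∈ unitInterval)
    (hz : z ∈ unitInterval) : |v z - v y| ≤ C * |z - y| ^ β := by
  wlog hyz : y ≤ z generalizing y z
  · rw [abs_sub_comm, abs_sub_comm z]
    exact this hz hy (le_of_not_ge hyz)
  rw [abs_of_nonneg (sub_nonneg.2 ((hv.strictMonoOn hC).monotoneOn hy hz hyz)),
    abs_of_nonneg (sub_nonneg.2 hyz)]
  exact (hv hy hz hyz).2

lemma le_abs_sub (hv : BiHolderMono C β v) (hy : y ∈ unitInterval) (hz : z ∈ unitInterval) :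
    C⁻¹ * |z - y| ^ (1 / β) ≤ |v z - v y| := by
  wlog hyz : y ≤ z generalizing y z
  · rw [abs_sub_comm, abs_sub_comm (v z)]
    exact this hz hy (le_of_not_ge hyz)
  rw [abs_of_nonneg (sub_nonneg.2 hyz)]
  exact (hv hy hz hyz).1.trans (le_abs_self _)

lemma abs_sub_le_rpow_abs_sub (hC : 0 < C) (hβ : 0 < β) (hv : BiHolderMono C β v)
    (hy : y ∈ unitInterval) (hz : z ∈ unitInterval) : |z - y| ≤ C ^ β * |v z - v y| ^ β := by
  have hlow := (inv_mul_le_iff₀ hC).1 (hv.le_abs_sub hy hz)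
  have hpow := Real.rpow_le_rpow (by positivity) hlow hβ.le
  rwa [← Real.rpow_mul (abs_nonneg _), one_div, inv_mul_cancel₀ hβ.ne', Real.rpow_one,
    Real.mul_rpow hC.le (abs_nonneg _)] at hpow

protected lemma id (hβ₀ : 0 < β) (hβ₁ : β ≤ 1) : BiHolderMono 1 β fun y => y := by
  intro y hy z hz hyz
  have h₀ : 0 ≤ z - y := sub_nonneg.2 hyz
  have h₁ : z - y ≤ 1 := by linarith [hy.1, hz.2]
  rw [inv_one, one_mul, one_mul]
  exact ⟨Real.rpow_le_self_of_le_one h₀ h₁ ((one_le_div hβ₀).2 hβ₁),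
    Real.self_le_rpow_of_le_one h₀ h₁ hβ₁⟩

lemma convexComb {C₁ C₂ t : ℝ} {v₁ v₂ : ℝ → ℝ} (hC₁ : 0 < C₁) (hC₂ : 0 < C₂)
    (h₁ : BiHolderMono C₁ β v₁) (h₂ : BiHolderMono C₂ β v₂) (ht₀ : 0 ≤ t) (ht₁ : t ≤ 1) :
    BiHolderMono ((1 - t) * C₁ + t * C₂) β fun y => (1 - t) * v₁ y + t * v₂ y := by
  intro y hy z hz hyz
  have hinv : ((1 - t) * C₁ + t * C₂)⁻¹ ≤ (1 - t) * C₁⁻¹ + t * C₂⁻¹ := by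
    simpa using (convexOn_zpow (𝕜 := ℝ) (-1)).2 hC₁ hC₂ (sub_nonneg.2 ht₁) ht₀ (by ring)
  obtain ⟨l₁, u₁⟩ := h₁ hy hz hyz
  obtain ⟨l₂, u₂⟩ := h₂ hy hz hyz
  have : 0 ≤ 1 - t := sub_nonneg.2 ht₁
  constructor
  · calc ((1 - t) * C₁ + t * C₂)⁻¹ * (z - y) ^ (1 / β)
        ≤ ((1 - t) * C₁⁻¹ + t * C₂⁻¹) * (z - y) ^ (1 / β) := by
          gcongr
      _ = (1 - t) * (C₁⁻¹ * (z - y) ^ (1 / β)) + t * (C₂⁻¹ * (z - y) ^ (1 / β)) := by ring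
      _ ≤ (1 - t) * (v₁ z - v₁ y) + t * (v₂ z - v₂ y) := by gcongr
      _ = _ := by ring
  · calc (1 - t) * v₁ z + t * v₂ z - ((1 - t) * v₁ y + t * v₂ y)
        = (1 - t) * (v₁ z - v₁ y) + t * (v₂ z - v₂ y) := by ring
      _ ≤ (1 - t) * (C₁ * (z - y) ^ β) + t * (C₂ * (z - y) ^ β) := by gcongr
      _ = _ := by ring

end BiHolderMono

namespace IsFol

variable {C β : ℝ} {f fx : ℝ → ℝ → ℝ} {x y z : ℝ}

lemma one_le_const (h : IsFol C β f fx) : 1 ≤ C := by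
  have := h.upper 0 unitInterval.zero_mem 0 unitInterval.zero_mem 1 unitInterval.one_mem zero_ne_one
  simpa [h.eq_bot 0 unitInterval.zero_mem, h.eq_top 0 unitInterval.zero_mem] using this

lemma const_pos (h : IsFol C β f fx) : 0 < C := one_pos.trans_le h.one_le_const

lemma abs_sub_le (hβ : 0 < β) (h : IsFol C β f fx) (hx : x ∈ unitInterval)
    (hy : y ∈ unitInterval) (hz : z ∈ unitInterval) : |f x z - f x y| ≤ C * |z - y| ^ β := by
  rcases eq_or_ne y z with rfl | hne
  · simp [Real.zero_rpow hβ.ne']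
  · exact h.upper x hx y hy z hz hne

lemma continuousOn_snd (hβ : 0 < β) (h : IsFol C β f fx) (hx : x ∈ unitInterval) :
    ContinuousOn (f x) unitInterval := by
  intro y hy
  rw [ContinuousWithinAt, tendsto_iff_dist_tendsto_zero]
  have hmod : Tendsto (fun z => C * |z - y| ^ β) (𝓝[unitInterval] y) (𝓝 0) := by
    have hcont : Continuous fun z : ℝ => C * |z - y| ^ β := by fun_prop (disch := exact hβ.le)
    refine (hcont.tendsto' y 0 ?_).mono_left nhdsWithin_le_nhds
    simp [Real.zero_rpow hβ.ne']
  refine squeeze_zero' (Eventually.of_forall fun _ => dist_nonneg) ?_ hmod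
  filter_upwards [self_mem_nhdsWithin] with z hz using h.abs_sub_le hβ hx hy hz

lemma injOn (h : IsFol C β f fx) (hx : x ∈ unitInterval) : InjOn (f x) unitInterval := by
  intro y hy z hz hyz
  by_contra hne
  have hlow := h.lower x hx y hy z hz hne
  have hpos : 0 < C⁻¹ * |z - y| ^ (1 / β) :=
    mul_pos (inv_pos.2 h.const_pos) (Real.rpow_pos_of_pos (abs_sub_pos.2 (Ne.symm hne)) _)
  rw [hyz, sub_self, abs_zero] at hlow
  exact hpos.not_ge hlow

lemma strictMonoOn (hβ : 0 < β) (h : IsFol C β f fx) (hx : x ∈ unitInterval) :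
    StrictMonoOn (f x) unitInterval := by
  refine (h.continuousOn_snd hβ hx).strictMonoOn_of_injOn_Icc zero_le_one ?_ (h.injOn hx)
  rw [h.eq_bot x hx, h.eq_top x hx]
  exact zero_le_one

lemma biHolderMono (hβ : 0 < β) (h : IsFol C β f fx) (hx : x ∈ unitInterval) :
    BiHolderMono C β (f x) := by
  intro y hy z hz hyz
  rcases hyz.eq_or_lt with rfl | hlt
  · simp [Real.zero_rpow hβ.ne', Real.zero_rpow (inv_ne_zero hβ.ne')]
  · have hlow := h.lower x hx y hy z hz hlt.ne
    have hupp := h.upper x hx y hy z hz hlt.ne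
    rw [abs_of_pos (sub_pos.2 hlt), abs_of_pos (sub_pos.2 (h.strictMonoOn hβ hx hy hz hlt))]
      at hlow hupp
    exact ⟨hlow, hupp⟩

lemma of_biHolderMono (hC : 0 < C)
    (hmono : ∀ x ∈ unitInterval, BiHolderMono C β (f x))
    (hderiv : ∀ y ∈ unitInterval, ∀ x ∈ unitInterval,
      HasDerivWithinAt (fun x' => f x' y) (fx x y) unitInterval x)
    (hcont : ContinuousOn (fun p : ℝ × ℝ => fx p.1 p.2) MSq)
    (hid : ∀ y ∈ unitInterval, f 0 y = y)
    (hbot : ∀ x ∈ unitInterval, f x 0 = 0) (htop : ∀ x ∈ unitInterval, f x 1 = 1) :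
    IsFol C β f fx where
  mapsTo x hx y hy := by
    have hm := ((hmono x hx).strictMonoOn hC).monotoneOn
    exact ⟨(hbot x hx).ge.trans (hm unitInterval.zero_mem hy hy.1),
      (hm hy unitInterval.one_mem hy.2).trans (htop x hx).le⟩
  hasDeriv := hderiv
  derivCont := hcont
  eq_id := hid
  eq_bot := hbot
  eq_top := htop
  lower x hx _ hy _ hz _ := (hmono x hx).le_abs_sub hy hz
  upper x hx _ hy _ hz _ := (hmono x hx).abs_sub_le hC hy hz

lemma continuousOn_fst (h : IsFol C β f fx) (hy : y ∈ unitInterval) :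
    ContinuousOn (fun x => f x y) unitInterval :=
  fun x hx => (h.hasDeriv y hy x hx).continuousWithinAt

lemma exists_apply_eq (hβ : 0 < β) (h : IsFol C β f fx) (hx : x ∈ unitInterval)
    (hz : z ∈ unitInterval) : ∃ y ∈ unitInterval, f x y = z := by
  have hivt := intermediate_value_Icc zero_le_one (h.continuousOn_snd hβ hx)
  rw [h.eq_bot x hx, h.eq_top x hx] at hivt
  exact hivt hz

lemma hinv_mem (hβ : 0 < β) (h : IsFol C β f fx) (hx : x ∈ unitInterval)
    (hz : z ∈ unitInterval) : hinv f x z ∈ unitInterval :=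
  Function.invFunOn_mem (h.exists_apply_eq hβ hx hz)

lemma apply_hinv (hβ : 0 < β) (h : IsFol C β f fx) (hx : x ∈ unitInterval)
    (hz : z ∈ unitInterval) : f x (hinv f x z) = z :=
  Function.invFunOn_eq (h.exists_apply_eq hβ hx hz)

lemma abs_hinv_sub_hinv_le (hβ : 0 < β) (h : IsFol C β f fx) (hx : x ∈ unitInterval)
    (hy : y ∈ unitInterval) (hz : z ∈ unitInterval) :
    |hinv f x z - hinv f x y| ≤ C ^ β * |z - y| ^ β := by
  have := (h.biHolderMono hβ hx).abs_sub_le_rpow_abs_sub h.const_pos hβ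
    (h.hinv_mem hβ hx hy) (h.hinv_mem hβ hx hz)
  rwa [h.apply_hinv hβ hx hy, h.apply_hinv hβ hx hz] at this

lemma deriv_zero (h : IsFol C β f fx) (hx : x ∈ unitInterval) : fx x 0 = 0 := by
  have hconst : HasDerivWithinAt (fun x' => f x' 0) 0 unitInterval x :=
    (hasDerivWithinAt_const x unitInterval (0 : ℝ)).congr h.eq_bot (h.eq_bot x hx)
  exact (uniqueDiffOn_Icc zero_lt_one x hx).eq_deriv _
    (h.hasDeriv 0 unitInterval.zero_mem x hx) hconst

lemma exists_abs_deriv_le (h : IsFol C β f fx) :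
    ∃ K, ∀ x ∈ unitInterval, ∀ y ∈ unitInterval, |fx x y| ≤ K := by
  obtain ⟨K, hK⟩ := (isCompact_Icc.prod isCompact_Icc).exists_bound_of_continuousOn h.derivCont
  exact ⟨K, fun x hx y hy => hK (x, y) ⟨hx, hy⟩⟩

lemma abs_sub_le_of_deriv {C' β' δ : ℝ} {g gx : ℝ → ℝ → ℝ} (hf : IsFol C β f fx)
    (hg : IsFol C' β' g gx) (hδ : ∀ x ∈ unitInterval, ∀ y ∈ unitInterval, |fx x y - gx x y| ≤ δ)
    (hx : x ∈ unitInterval) (hy : y ∈ unitInterval) : |f x y - g x y| ≤ δ := by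
  have hmvt := Convex.norm_image_sub_le_of_norm_hasDerivWithin_le
    (fun x hx => (hf.hasDeriv y hy x hx).sub (hg.hasDeriv y hy x hx))
    (fun x hx => hδ x hx y hy) (convex_Icc 0 1) unitInterval.zero_mem hx
  simp only [Pi.sub_apply, hf.eq_id y hy, hg.eq_id y hy, sub_self, sub_zero, Real.norm_eq_abs,
    abs_of_nonneg hx.1] at hmvt
  exact hmvt.trans (mul_le_of_le_one_right ((abs_nonneg _).trans (hδ x hx y hy)) hx.2)

protected lemma trivial (hβ₀ : 0 < β) (hβ₁ : β ≤ 1) : IsFol 1 β (fun _ y => y) 0 :=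
  of_biHolderMono one_pos (fun _ _ => BiHolderMono.id hβ₀ hβ₁)
    (fun y _ x _ => hasDerivWithinAt_const x _ y) continuousOn_const
    (fun _ _ => rfl) (fun _ _ => rfl) (fun _ _ => rfl)

lemma convexComb {C₁ C₂ t : ℝ} {g gx : ℝ → ℝ → ℝ} (hβ : 0 < β) (hf : IsFol C₁ β f fx)
    (hg : IsFol C₂ β g gx) (ht₀ : 0 ≤ t) (ht₁ : t ≤ 1) :
    IsFol ((1 - t) * C₁ + t * C₂) β (fun x y => (1 - t) * f x y + t * g x y)
      (fun x y => (1 - t) * fx x y + t * gx x y) := by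
  refine of_biHolderMono ?_ (fun x hx => (hf.biHolderMono hβ hx).convexComb hf.const_pos
    hg.const_pos (hg.biHolderMono hβ hx) ht₀ ht₁)
    (fun y hy x hx => ((hf.hasDeriv y hy x hx).const_mul _).add
      ((hg.hasDeriv y hy x hx).const_mul _))
    ((continuousOn_const.mul hf.derivCont).add (continuousOn_const.mul hg.derivCont)) ?_ ?_ ?_
  · nlinarith [hf.one_le_const, hg.one_le_const]
  · intro y hy
    rw [hf.eq_id y hy, hg.eq_id y hy]
    ring
  · intro x hx
    rw [hf.eq_bot x hx, hg.eq_bot x hx]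
    ring
  · intro x hx
    rw [hf.eq_top x hx, hg.eq_top x hx]
    ring

/- Mixing in a little of the trivial foliation, which has the best possible constant `1`, leaves
room in both Hölder bounds. -/
lemma exists_slack {δ : ℝ} (hβ₀ : 0 < β) (hβ₁ : β ≤ 1) (hC : 1 < C) (h : IsFol C β f fx)
    (hδ : 0 < δ) : ∃ C₁ < C, ∃ g gx : ℝ → ℝ → ℝ, IsFol C₁ β g gx ∧
      ∀ x ∈ unitInterval, ∀ y ∈ unitInterval, |gx x y - fx x y| ≤ δ := by
  obtain ⟨K, hK⟩ := h.exists_abs_deriv_le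
  have hK₀ : 0 ≤ K :=
    (abs_nonneg _).trans (hK 0 unitInterval.zero_mem 0 unitInterval.zero_mem)
  set t := min 1 (δ / (K + 1))
  have ht₀ : 0 < t := by positivity
  have ht₁ : t ≤ 1 := min_le_left _ _
  have htK : t * K ≤ δ := by
    have := (le_div_iff₀ (by positivity)).1 (min_le_right 1 (δ / (K + 1)))
    linarith
  refine ⟨_, ?_, _, _, h.convexComb hβ₀ (.trivial hβ₀ hβ₁) ht₀.le ht₁, fun x hx y hy => ?_⟩
  · nlinarith
  · calc |(1 - t) * fx x y + t * 0 - fx x y| = |t * fx x y| := by rw [← abs_neg]; ring_nf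
      _ = t * |fx x y| := by rw [abs_mul, abs_of_pos ht₀]
      _ ≤ t * K := by gcongr; exact hK x hx y hy
      _ ≤ δ := htK

end IsFol

/-! ### Estimates for the distance -/

lemma div_rpow_le_of_le_of_le_mul_rpow {α β A B X Δ : ℝ} (hα : 0 ≤ α) (hαβ : α < β) (hΔ : 0 < Δ)
    (hB : 0 ≤ B) (hX : 0 ≤ X) (hXA : X ≤ A) (hXB : X ≤ B * Δ ^ β) :
    X / Δ ^ α ≤ A ^ (1 - α / β) * B ^ (α / β) := by
  have hβ : 0 < β := hα.trans_lt hαβ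
  have hr : 0 ≤ α / β := by positivity
  have hr' : 0 ≤ 1 - α / β := sub_nonneg.2 ((div_le_one hβ).2 hαβ.le)
  have hpow : Δ ^ α = (Δ ^ β) ^ (α / β) := by rw [← Real.rpow_mul hΔ.le, mul_div_cancel₀ _ hβ.ne']
  rw [div_le_iff₀ (Real.rpow_pos_of_pos hΔ α), hpow, mul_assoc, ← Real.mul_rpow hB (by positivity)]
  calc X = X ^ (1 - α / β) * X ^ (α / β) := by
        rw [← Real.rpow_add_of_nonneg hX hr' hr, sub_add_cancel, Real.rpow_one]
    _ ≤ A ^ (1 - α / β) * (B * Δ ^ β) ^ (α / β) := by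
        have := Real.rpow_nonneg (hX.trans hXA) (1 - α / β)
        gcongr

lemma holDist_nonneg (α : ℝ) (h k : ℝ → ℝ) : 0 ≤ holDist α h k := by
  refine Real.sSup_nonneg ?_
  rintro r ⟨y, -, z, -, -, rfl⟩
  positivity

lemma holDist_le {α β A B : ℝ} {h k : ℝ → ℝ} (hα : 0 ≤ α) (hαβ : α < β) (hA : 0 ≤ A) (hB : 0 ≤ B)
    (hhk : ∀ y ∈ unitInterval, |h y - k y| ≤ A)
    (hh : ∀ y ∈ unitInterval, ∀ z ∈ unitInterval, |h z - h y| ≤ B * |z - y| ^ β)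
    (hk : ∀ y ∈ unitInterval, ∀ z ∈ unitInterval, |k z - k y| ≤ B * |z - y| ^ β) :
    holDist α h k ≤ (2 * A) ^ (1 - α / β) * (2 * B) ^ (α / β) := by
  refine Real.sSup_le ?_ (by positivity)
  rintro r ⟨y, hy, z, hz, hyz, rfl⟩
  refine div_rpow_le_of_le_of_le_mul_rpow hα hαβ (abs_sub_pos.2 hyz.symm) (by positivity)
    (abs_nonneg _) ?_ ?_
  · linarith [abs_sub (h z - k z) (h y - k y), hhk y hy, hhk z hz]
  · rw [sub_sub_sub_comm]
    linarith [abs_sub (h z - h y) (k z - k y), hh y hy z hz, hk y hy z hz]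

lemma C0dist_nonneg (u v : ℝ → ℝ → ℝ) : 0 ≤ C0dist u v := by
  refine Real.sSup_nonneg ?_
  rintro r ⟨x, -, y, -, rfl⟩
  positivity

lemma C0dist_le {u v : ℝ → ℝ → ℝ} {δ : ℝ}
    (huv : ∀ x ∈ unitInterval, ∀ y ∈ unitInterval, |u x y - v x y| ≤ δ) : C0dist u v ≤ δ := by
  refine Real.sSup_le ?_ ((abs_nonneg _).trans
    (huv 0 unitInterval.zero_mem 0 unitInterval.zero_mem))
  rintro r ⟨x, hx, y, hy, rfl⟩
  exact huv x hx y hy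

lemma IsFol.abs_hinv_sub_le {C β δ x z : ℝ} {f fx g gx : ℝ → ℝ → ℝ} (hβ : 0 < β)
    (hf : IsFol C β f fx) (hg : IsFol C β g gx)
    (hδ : ∀ x ∈ unitInterval, ∀ y ∈ unitInterval, |f x y - g x y| ≤ δ)
    (hx : x ∈ unitInterval) (hz : z ∈ unitInterval) :
    |hinv f x z - hinv g x z| ≤ C ^ β * δ ^ β := by
  have hmem := hg.hinv_mem hβ hx hz
  have hC := hf.const_pos
  refine ((hf.biHolderMono hβ hx).abs_sub_le_rpow_abs_sub hC hβ hmem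
    (hf.hinv_mem hβ hx hz)).trans ?_
  gcongr
  calc |f x (hinv f x z) - f x (hinv g x z)| = |f x (hinv g x z) - g x (hinv g x z)| := by
        rw [hf.apply_hinv hβ hx hz, hg.apply_hinv hβ hx hz, abs_sub_comm]
    _ ≤ δ := hδ x hx _ hmem

/- The `C⁰` terms of the distance are at most `δ`; the Hölder terms are interpolated between the
`C⁰` closeness and the common `β`-Hölder bounds. -/
lemma dalphaF_le {C β α δ : ℝ} (hα : 0 ≤ α) (hαβ : α < β) {F G : Fol C β}
    (hδ : ∀ x ∈ unitInterval, ∀ y ∈ unitInterval, |F.fx x y - G.fx x y| ≤ δ) :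
    dalphaF α F G ≤ δ + δ + max ((2 * δ) ^ (1 - α / β) * (2 * C) ^ (α / β))
      ((2 * (C ^ β * δ ^ β)) ^ (1 - α / β) * (2 * C ^ β) ^ (α / β)) := by
  have hβ : 0 < β := hα.trans_lt hαβ
  have hF := F.isFol
  have hG := G.isFol
  have hC := hF.const_pos
  have hδ₀ : 0 ≤ δ :=
    (abs_nonneg _).trans (hδ 0 unitInterval.zero_mem 0 unitInterval.zero_mem)
  have hC0 : ∀ x ∈ unitInterval, ∀ y ∈ unitInterval, |F.f x y - G.f x y| ≤ δ :=
    fun x hx y hy => hF.abs_sub_le_of_deriv hG hδ hx hy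
  refine add_le_add (add_le_add (C0dist_le hC0) (C0dist_le hδ)) (Real.sSup_le ?_ (by positivity))
  rintro r ⟨x, hx, rfl⟩
  refine max_le_max ?_ ?_
  · exact holDist_le hα hαβ hδ₀ hC.le (hC0 x hx)
      (fun y hy z hz => hF.abs_sub_le hβ hx hy hz) (fun y hy z hz => hG.abs_sub_le hβ hx hy hz)
  · exact holDist_le hα hαβ (by positivity) (by positivity)
      (fun y hy => hF.abs_hinv_sub_le hβ hG hC0 hx hy)
      (fun y hy z hz => hF.abs_hinv_sub_hinv_le hβ hx hy hz)
      (fun y hy z hz => hG.abs_hinv_sub_hinv_le hβ hx hy hz)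

lemma exists_dalphaF_lt {α β ε : ℝ} (C : ℝ) (hα : 0 ≤ α) (hαβ : α < β) (hε : 0 < ε) :
    ∃ δ > 0, ∀ F G : Fol C β,
      (∀ x ∈ unitInterval, ∀ y ∈ unitInterval, |F.fx x y - G.fx x y| ≤ δ) → dalphaF α F G < ε := by
  have hβ : 0 < β := hα.trans_lt hαβ
  have hr : 0 < 1 - α / β := sub_pos.2 ((div_lt_one hβ).2 hαβ)
  have hlim : Tendsto (fun δ : ℝ => δ + δ + max ((2 * δ) ^ (1 - α / β) * (2 * C) ^ (α / β))
      ((2 * (C ^ β * δ ^ β)) ^ (1 - α / β) * (2 * C ^ β) ^ (α / β))) (𝓝[>] 0) (𝓝 0) := by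
    refine Tendsto.mono_left (Continuous.tendsto' ?_ 0 0 ?_) nhdsWithin_le_nhds
    · fun_prop (disch := first | exact hβ.le | exact hr.le)
    · simp [Real.zero_rpow hβ.ne', Real.zero_rpow hr.ne']
  obtain ⟨δ, hlt, hδ⟩ := ((hlim.eventually_lt_const hε).and self_mem_nhdsWithin).exists
  exact ⟨δ, hδ, fun F G hFG => (dalphaF_le hα hαβ hFG).trans_lt hlt⟩

lemma abs_sub_le_dalphaF {C β x y : ℝ} (α : ℝ) (F G : Fol C β) (hx : x ∈ unitInterval)
    (hy : y ∈ unitInterval) : |F.f x y - G.f x y| ≤ dalphaF α F G := by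
  have hC0 : |F.f x y - G.f x y| ≤ C0dist F.f G.f := by
    refine le_csSup ⟨1, ?_⟩ ⟨x, hx, y, hy, rfl⟩
    rintro r ⟨x, hx, y, hy, rfl⟩
    exact Real.dist_le_of_mem_Icc_01 (F.isFol.mapsTo x hx y hy) (G.isFol.mapsTo x hx y hy)
  have hhol : 0 ≤ sSup {r | ∃ x ∈ unitInterval,
      r = max (holDist α (F.f x) (G.f x)) (holDist α (hinv F.f x) (hinv G.f x))} := by
    refine Real.sSup_nonneg ?_
    rintro r ⟨x, -, rfl⟩
    exact le_max_of_le_left (holDist_nonneg _ _ _)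
  unfold dalphaF dalpha
  linarith [C0dist_nonneg F.fx G.fx]

/-! ### Areas of partition elements -/

/-- The increment of `v` over the `k`-th cell `[k/N, (k+1)/N]` of the uniform grid of mesh `1/N`.
For `v = f x` and `N = 2ⁿ` it is the height over `x` of the `k`-th element of `P_{f,n}`. -/
def cellIncr (v : ℝ → ℝ) (N k : ℕ) : ℝ := v ((k + 1) / N) - v (k / N)

lemma div_natCast_mem_unitInterval {N k : ℕ} (hk : k ≤ N) : (k : ℝ) / N ∈ unitInterval :=
  ⟨by positivity, div_le_one_of_le₀ (by exact_mod_cast hk) (by positivity)⟩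

lemma succ_div_natCast_mem_unitInterval {N k : ℕ} (hk : k < N) :
    ((k : ℝ) + 1) / N ∈ unitInterval := by
  exact_mod_cast div_natCast_mem_unitInterval (Nat.succ_le_of_lt hk)

lemma cellIncr_mem_unitInterval {v : ℝ → ℝ} {N k : ℕ} (hv : MonotoneOn v unitInterval)
    (hv₀ : v 0 = 0) (hv₁ : v 1 = 1) (hk : k < N) : cellIncr v N k ∈ unitInterval := by
  have hl := div_natCast_mem_unitInterval hk.le
  have hr := succ_div_natCast_mem_unitInterval hk
  have hlr : (k : ℝ) / N ≤ (k + 1) / N := by gcongr; linarith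
  have h₀ := hv unitInterval.zero_mem hl hl.1
  have h₁ := hv hr unitInterval.one_mem hr.2
  unfold cellIncr
  constructor <;> linarith [hv hl hr hlr]

lemma BiHolderMono.le_cellIncr {C β : ℝ} {v : ℝ → ℝ} {N k : ℕ} (hv : BiHolderMono C β v)
    (hk : k < N) : C⁻¹ * (1 / N : ℝ) ^ (1 / β) ≤ cellIncr v N k := by
  have hlr : (k : ℝ) / N ≤ (k + 1) / N := by gcongr; linarith
  have := (hv (div_natCast_mem_unitInterval hk.le) (succ_div_natCast_mem_unitInterval hk) hlr).1
  rwa [← sub_div, add_sub_cancel_left] at this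

namespace IsFol

variable {C β : ℝ} {f fx : ℝ → ℝ → ℝ} {N k : ℕ} {x : ℝ}

lemma cellIncr_mem_unitInterval (hβ : 0 < β) (h : IsFol C β f fx) (hk : k < N)
    (hx : x ∈ unitInterval) : cellIncr (f x) N k ∈ unitInterval :=
  _root_.cellIncr_mem_unitInterval (h.strictMonoOn hβ hx).monotoneOn (h.eq_bot x hx)
    (h.eq_top x hx) hk

lemma continuousOn_cellIncr (h : IsFol C β f fx) (hk : k < N) :
    ContinuousOn (fun x => cellIncr (f x) N k) unitInterval :=
  (h.continuousOn_fst (succ_div_natCast_mem_unitInterval hk)).sub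
    (h.continuousOn_fst (div_natCast_mem_unitInterval hk.le))

lemma integrableOn_cellIncr (h : IsFol C β f fx) (hk : k < N) :
    IntegrableOn (fun x => cellIncr (f x) N k) unitInterval :=
  (h.continuousOn_cellIncr hk).integrableOn_compact isCompact_Icc

end IsFol

lemma prod_regionBetween_co {Ω : Type*} [MeasurableSpace Ω] {μ : Measure Ω} {v₁ v₂ : Ω → ℝ}
    (h₁ : AEMeasurable v₁ μ) (h₂ : AEMeasurable v₂ μ) :
    μ.prod volume {p : Ω × ℝ | p.2 ∈ Ico (v₁ p.1) (v₂ p.1)} =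
      ∫⁻ x, ENNReal.ofReal (v₂ x - v₁ x) ∂μ := by
  have hmeas : NullMeasurableSet {p : Ω × ℝ | p.2 ∈ Ico (v₁ p.1) (v₂ p.1)} (μ.prod volume) := by
    simpa only [mem_univ, true_and] using
      nullMeasurableSet_region_between_co μ h₁ h₂ nullMeasurableSet_univ
  rw [← lintegral_indicator_one₀ hmeas,
    lintegral_prod _ (measurable_one.aemeasurable.indicator₀ hmeas)]
  refine lintegral_congr fun x => ?_
  rw [← Real.volume_Ico, ← lintegral_indicator_one measurableSet_Ico]
  rfl

lemma Pelt_inter_prod {C β : ℝ} {f fx : ℝ → ℝ → ℝ} {n i : ℕ} {J : Set ℝ} (h : IsFol C β f fx)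
    (hi : i < 2 ^ n) (hJ : J ⊆ unitInterval) :
    Pelt f n i ∩ J ×ˢ unitInterval =
      {p | p.2 ∈ Ico (f p.1 (i / 2 ^ n)) (f p.1 ((i + 1) / 2 ^ n))} ∩ J ×ˢ univ := by
  have hl : (i : ℝ) / 2 ^ n ∈ unitInterval := by
    exact_mod_cast div_natCast_mem_unitInterval hi.le
  have hr : ((i : ℝ) + 1) / 2 ^ n ∈ unitInterval := by
    exact_mod_cast succ_div_natCast_mem_unitInterval hi
  ext ⟨x, z⟩
  constructor
  · rintro ⟨⟨-, hz₁, hz₂⟩, hx, -⟩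
    exact ⟨⟨hz₁, hz₂⟩, hx, trivial⟩
  · rintro ⟨⟨hz₁, hz₂⟩, hx, -⟩
    exact ⟨⟨hJ hx, hz₁, hz₂⟩, hx, (h.mapsTo x (hJ hx) _ hl).1.trans hz₁,
      hz₂.le.trans (h.mapsTo x (hJ hx) _ hr).2⟩

lemma muM_Pelt_inter {C β : ℝ} {f fx : ℝ → ℝ → ℝ} {n i : ℕ} {J : Set ℝ} (hβ : 0 < β)
    (h : IsFol C β f fx) (hi : i < 2 ^ n) (hJ : J ⊆ unitInterval) (hJm : MeasurableSet J) :
    muM (Pelt f n i ∩ J ×ˢ unitInterval) =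
      ENNReal.ofReal (∫ x in J, cellIncr (f x) (2 ^ n) i) := by
  have hint := (h.integrableOn_cellIncr hi).mono_set hJ
  have hnonneg : 0 ≤ᵐ[volume.restrict J] fun x => cellIncr (f x) (2 ^ n) i :=
    ae_restrict_of_forall_mem hJm fun x hx => (h.cellIncr_mem_unitInterval hβ hi (hJ hx)).1
  have hmeas : ∀ k : ℕ, k ≤ 2 ^ n →
      AEMeasurable (fun x => f x (k / (2 ^ n : ℕ))) (volume.restrict J) := fun k hk =>
    ((h.continuousOn_fst (div_natCast_mem_unitInterval hk)).mono hJ).aemeasurable hJm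
  have hl := hmeas i hi.le
  have hr := hmeas (i + 1) hi
  push_cast at hl hr
  have hM : MeasurableSet MSq := measurableSet_Icc.prod measurableSet_Icc
  have hsub : Pelt f n i ∩ J ×ˢ unitInterval ⊆ MSq := inter_subset_right.trans (prod_mono_left hJ)
  rw [muM, Measure.restrict_apply' hM, inter_eq_left.2 hsub, Pelt_inter_prod h hi hJ,
    ← Measure.restrict_apply' (hJm.prod .univ), Measure.volume_eq_prod, ← Measure.prod_restrict,
    Measure.restrict_univ, prod_regionBetween_co hl hr,
    ofReal_integral_eq_lintegral_ofReal hint hnonneg]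
  simp only [cellIncr, Nat.cast_pow, Nat.cast_ofNat]

lemma muM_Pelt {C β : ℝ} {f fx : ℝ → ℝ → ℝ} {n i : ℕ} (hβ : 0 < β) (h : IsFol C β f fx)
    (hi : i < 2 ^ n) :
    muM (Pelt f n i) = ENNReal.ofReal (∫ x in unitInterval, cellIncr (f x) (2 ^ n) i) := by
  have hM : MeasurableSet MSq := measurableSet_Icc.prod measurableSet_Icc
  rw [← muM_Pelt_inter hβ h hi subset_rfl measurableSet_Icc, ← MSq, muM,
    Measure.restrict_apply' hM, Measure.restrict_apply' hM, inter_assoc, inter_self]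

lemma integral_cellIncr_pos {C β : ℝ} {f fx : ℝ → ℝ → ℝ} {N k : ℕ} (hβ : 0 < β)
    (h : IsFol C β f fx) (hk : k < N) : 0 < ∫ x in unitInterval, cellIncr (f x) N k := by
  have hN : (0 : ℝ) < N := by exact_mod_cast hk.pos
  have hC := h.const_pos
  have hlow : ∫ _ in unitInterval, C⁻¹ * (1 / N : ℝ) ^ (1 / β) ≤
      ∫ x in unitInterval, cellIncr (f x) N k :=
    setIntegral_mono_on (integrableOn_const (by simp)) (h.integrableOn_cellIncr hk)
      measurableSet_Icc fun x hx => (h.biHolderMono hβ hx).le_cellIncr hk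
  refine lt_of_lt_of_le ?_ hlow
  simp only [setIntegral_const, unitInterval, Real.volume_real_Icc_of_le zero_le_one, smul_eq_mul]
  positivity

/-- The set `P` carries less than the fraction `1/m` of the mass of `[0,1]` with density `w`. -/
def IsLight (m : ℕ) (w : ℝ → ℝ) (P : Set ℝ) : Prop :=
  m * ∫ x in P, w x < ∫ x in unitInterval, w x

lemma ofReal_div_ofReal_lt_one_div_iff {m : ℕ} {A T : ℝ} (hm : 0 < m) (hT : 0 < T) :
    ENNReal.ofReal A / ENNReal.ofReal T < 1 / (m : ℝ≥0∞) ↔ m * A < T := by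
  have hm' : (0 : ℝ) < m := by exact_mod_cast hm
  rw [← ENNReal.ofReal_div_of_pos hT, one_div, ← ENNReal.ofReal_natCast,
    ← ENNReal.ofReal_inv_of_pos hm', ENNReal.ofReal_lt_ofReal_iff (inv_pos.2 hm'),
    div_lt_iff₀ hT, lt_inv_mul_iff₀ hm']

lemma one_sub_one_div_lt_ofReal_div_ofReal_iff {m : ℕ} {A T : ℝ} (hm : 0 < m) (hT : 0 < T) :
    1 - 1 / (m : ℝ≥0∞) < ENNReal.ofReal A / ENNReal.ofReal T ↔ m * (T - A) < T := by
  have hm' : (1 : ℝ) ≤ m := by exact_mod_cast hm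
  have hm₀ : (0 : ℝ) < m := one_pos.trans_le hm'
  rw [← ENNReal.ofReal_div_of_pos hT, one_div, ← ENNReal.ofReal_natCast,
    ← ENNReal.ofReal_inv_of_pos hm₀, ← ENNReal.ofReal_one, ← ENNReal.ofReal_sub _ (by positivity),
    ENNReal.ofReal_lt_ofReal_iff_of_nonneg (sub_nonneg.2 (inv_le_one_of_one_le₀ hm')),
    lt_div_iff₀ hT, sub_mul, one_mul, sub_lt_comm, lt_inv_mul_iff₀ hm₀]

lemma mem_Aset_iff_isLight {C β a b : ℝ} {n m : ℕ} (hβ : 0 < β) (hm : 0 < m)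
    (hJ : Icc a b ⊆ unitInterval) (F : Fol C β) :
    F ∈ Aset C β n m a b ↔ ∀ i < 2 ^ n,
      IsLight m (fun x => cellIncr (F.f x) (2 ^ n) i) (Icc a b) ∨
      IsLight m (fun x => cellIncr (F.f x) (2 ^ n) i) (unitInterval \ Icc a b) := by
  refine forall₂_congr fun i hi => ?_
  have hT := integral_cellIncr_pos hβ F.isFol hi
  rw [Itilde, muM_Pelt_inter hβ F.isFol hi hJ measurableSet_Icc, muM_Pelt hβ F.isFol hi,
    ofReal_div_ofReal_lt_one_div_iff hm hT, one_sub_one_div_lt_ofReal_div_ofReal_iff hm hT, IsLight,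
    IsLight, setIntegral_sdiff measurableSet_Icc (F.isFol.integrableOn_cellIncr hi) hJ]

lemma abs_setIntegral_sub_le {w w' : ℝ → ℝ} {P : Set ℝ} {ε : ℝ} (hP : P ⊆ unitInterval)
    (hw : IntegrableOn w unitInterval) (hw' : IntegrableOn w' unitInterval)
    (hww' : ∀ x ∈ unitInterval, |w' x - w x| ≤ ε) :
    |(∫ x in P, w' x) - ∫ x in P, w x| ≤ ε := by
  have hvol : volume.real P ≤ 1 := by
    simpa using measureReal_mono (μ := volume) hP isCompact_Icc.measure_ne_top
  have hε : 0 ≤ ε := (abs_nonneg _).trans (hww' 0 unitInterval.zero_mem)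
  rw [← integral_sub (hw'.mono_set hP) (hw.mono_set hP), ← Real.norm_eq_abs]
  calc ‖∫ x in P, (w' x - w x)‖ ≤ ε * volume.real P :=
        norm_setIntegral_le_of_norm_le_const
          ((measure_mono hP).trans_lt isCompact_Icc.measure_lt_top) fun x hx => hww' x (hP hx)
    _ ≤ ε := mul_le_of_le_one_right hε hvol

namespace IsLight

variable {m : ℕ} {w : ℝ → ℝ} {P : Set ℝ}

lemma of_volume_eq_zero (hP : volume P = 0) (hw : 0 < ∫ x in unitInterval, w x) :
    IsLight m w P := by
  rwa [IsLight, setIntegral_measure_zero w hP, mul_zero]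

lemma const_mul {c : ℝ} (h : IsLight m w P) (hc : 0 < c) : IsLight m (fun x => c * w x) P := by
  rw [IsLight, integral_const_mul, integral_const_mul, mul_left_comm]
  exact mul_lt_mul_of_pos_left h hc

lemma eventually_of_abs_sub_le (h : IsLight m w P) (hP : P ⊆ unitInterval)
    (hw : IntegrableOn w unitInterval) :
    ∀ᶠ ε in 𝓝 (0 : ℝ), ∀ w' : ℝ → ℝ, IntegrableOn w' unitInterval →
      (∀ x ∈ unitInterval, |w' x - w x| ≤ ε) → IsLight m w' P := by
  have hlim : Tendsto (fun ε : ℝ => (m + 1) * ε) (𝓝 0) (𝓝 0) :=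
    Continuous.tendsto' (by fun_prop) _ _ (mul_zero _)
  filter_upwards [hlim.eventually_lt_const (sub_pos.2 h)] with ε hε w' hw' hww'
  have hPw := (abs_le.1 (abs_setIntegral_sub_le hP hw hw' hww')).2
  have hIw := (abs_le.1 (abs_setIntegral_sub_le subset_rfl hw hw' hww')).1
  have hmP : m * ((∫ x in P, w' x) - ∫ x in P, w x) ≤ m * ε := by gcongr
  unfold IsLight
  linarith

end IsLight

lemma abs_cellIncr_sub_le {v v' : ℝ → ℝ} {N k : ℕ} {ε : ℝ} (hk : k < N)
    (hvv' : ∀ y ∈ unitInterval, |v' y - v y| ≤ ε) :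
    |cellIncr v' N k - cellIncr v N k| ≤ 2 * ε := by
  have hr := hvv' _ (succ_div_natCast_mem_unitInterval hk)
  have hl := hvv' _ (div_natCast_mem_unitInterval hk.le)
  calc |cellIncr v' N k - cellIncr v N k|
      = |(v' ((k + 1) / N) - v ((k + 1) / N)) - (v' (k / N) - v (k / N))| := by
        rw [cellIncr, cellIncr, sub_sub_sub_comm]
    _ ≤ |v' ((k + 1) / N) - v ((k + 1) / N)| + |v' (k / N) - v (k / N)| := abs_sub _ _
    _ ≤ 2 * ε := by linarith

lemma IsLight.eventually_cellIncr {C β : ℝ} {m N k : ℕ} {P : Set ℝ} {F : Fol C β}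
    (hlight : IsLight m (fun x => cellIncr (F.f x) N k) P) (hk : k < N) (hP : P ⊆ unitInterval) :
    ∀ᶠ ε in 𝓝[>] (0 : ℝ), ∀ G : Fol C β,
      (∀ x ∈ unitInterval, ∀ y ∈ unitInterval, |G.f x y - F.f x y| ≤ ε) →
      IsLight m (fun x => cellIncr (G.f x) N k) P := by
  have hdouble : Tendsto (fun ε : ℝ => 2 * ε) (𝓝[>] 0) (𝓝 0) :=
    (Continuous.tendsto' (by fun_prop) _ _ (mul_zero _)).mono_left nhdsWithin_le_nhds
  filter_upwards [hdouble.eventually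
    (hlight.eventually_of_abs_sub_le hP (F.isFol.integrableOn_cellIncr hk))] with ε hε G hG
  exact hε _ (G.isFol.integrableOn_cellIncr hk) fun x hx => abs_cellIncr_sub_le hk (hG x hx)

lemma isOpenWrt_Aset {C β a b : ℝ} {m : ℕ} (α : ℝ) (n : ℕ) (hβ : 0 < β) (hm : 0 < m)
    (hJ : Icc a b ⊆ unitInterval) :
    IsOpenWrt (fun F G : Fol C β => dalphaF α F G) (Aset C β n m a b) := by
  intro F hF
  rw [mem_Aset_iff_isLight hβ hm hJ] at hF
  have hstable : ∀ i ∈ Finset.range (2 ^ n), ∀ᶠ ε in 𝓝[>] (0 : ℝ), ∀ G : Fol C β,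
      (∀ x ∈ unitInterval, ∀ y ∈ unitInterval, |G.f x y - F.f x y| ≤ ε) →
      IsLight m (fun x => cellIncr (G.f x) (2 ^ n) i) (Icc a b) ∨
      IsLight m (fun x => cellIncr (G.f x) (2 ^ n) i) (unitInterval \ Icc a b) := by
    intro i hi
    rw [Finset.mem_range] at hi
    rcases hF i hi with hin | hout
    · filter_upwards [hin.eventually_cellIncr hi hJ] with ε hε G hG
        using Or.inl (hε G hG)
    · filter_upwards [hout.eventually_cellIncr hi sdiff_subset] with ε hε G hG
        using Or.inr (hε G hG)
  obtain ⟨ε, hε, hεpos⟩ :=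
    (((Filter.eventually_all_finset _).2 hstable).and self_mem_nhdsWithin).exists
  refine ⟨ε, hεpos, fun G hG => (mem_Aset_iff_isLight hβ hm hJ G).2 fun i hi => ?_⟩
  exact hε i (Finset.mem_range.2 hi) G fun x hx y hy =>
    (abs_sub_le_dalphaF α G F hx hy).trans hG.le

lemma IsOpenWrt.iUnion {X ι : Type*} {d : X → X → ℝ} {s : ι → Set X}
    (hs : ∀ i, IsOpenWrt d (s i)) : IsOpenWrt d (⋃ i, s i) := by
  intro f hf
  obtain ⟨i, hi⟩ := mem_iUnion.1 hf
  obtain ⟨ε, hε, hball⟩ := hs i f hi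
  exact ⟨ε, hε, fun g hg => mem_iUnion_of_mem i (hball g hg)⟩

/-! ### Oscillating perturbations -/

/-- The increasing piecewise linear function which is `0` before the `k`-th cell of the uniform
grid of mesh `1/N`, `1` after it, and the affine coordinate of that cell on it. -/
def ramp (N k : ℕ) (y : ℝ) : ℝ := max 0 (min 1 (N * y - k))

/-- The function which runs through a copy of the profile `Φ`, scaled by the increment of `v`, on
each cell of the uniform grid of mesh `1/N`. For `Φ 0 = 0` and `Φ 1 = 1` it agrees with `v - v 0`
on the grid; for `Φ = id` it is the piecewise linear interpolation of `v - v 0`. -/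
def cellwise (Φ : ℝ → ℝ) (N : ℕ) (v : ℝ → ℝ) (y : ℝ) : ℝ :=
  ∑ k ∈ Finset.range N, cellIncr v N k * Φ (ramp N k y)

lemma ramp_mem_unitInterval (N k : ℕ) (y : ℝ) : ramp N k y ∈ unitInterval :=
  ⟨le_max_left _ _, max_le zero_le_one (min_le_left _ _)⟩

lemma ramp_monotone (N k : ℕ) : Monotone (ramp N k) := by
  intro y z hyz
  unfold ramp
  gcongr

lemma continuous_ramp (N k : ℕ) : Continuous (ramp N k) := by
  unfold ramp
  fun_prop

lemma ramp_add_div {N : ℕ} {s : ℝ} (hN : 0 < N) (a k : ℕ) (hs : s ∈ unitInterval) :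
    ramp N k ((a + s) / N) = if k < a then 1 else if k = a then s else 0 := by
  have hN' : (N : ℝ) ≠ 0 := by exact_mod_cast hN.ne'
  rw [ramp, mul_div_cancel₀ _ hN']
  split_ifs with hlt heq
  · have : (k : ℝ) + 1 ≤ a := by exact_mod_cast hlt
    rw [min_eq_left (by linarith [hs.1]), max_eq_right zero_le_one]
  · rw [heq, add_sub_cancel_left, min_eq_right hs.2, max_eq_right hs.1]
  · have : (a : ℝ) + 1 ≤ k := by exact_mod_cast (show a + 1 ≤ k by lia)
    exact max_eq_left ((min_le_right _ _).trans (by linarith [hs.2]))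

lemma exists_eq_add_div {N : ℕ} {y : ℝ} (hN : 0 < N) (hy : y ∈ unitInterval) :
    ∃ a < N, ∃ s ∈ unitInterval, y = (a + s) / N := by
  have hN' : (0 : ℝ) < N := by exact_mod_cast hN
  rcases hy.2.eq_or_lt with rfl | hlt
  · refine ⟨N - 1, Nat.sub_one_lt hN.ne', 1, unitInterval.one_mem, ?_⟩
    rw [Nat.cast_pred hN, sub_add_cancel, div_self hN'.ne']
  · have hNy : 0 ≤ N * y := mul_nonneg hN'.le hy.1
    refine ⟨⌊N * y⌋₊, (Nat.floor_lt hNy).2 (mul_lt_of_lt_one_right hN' hlt), N * y - ⌊N * y⌋₊,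
      ⟨sub_nonneg.2 (Nat.floor_le hNy), ?_⟩, ?_⟩
    · linarith [Nat.lt_floor_add_one (N * y)]
    · rw [add_sub_cancel, mul_div_cancel_left₀ _ hN'.ne']

section cellwise

variable {Φ v : ℝ → ℝ} {N : ℕ}

lemma cellwise_add_div {a : ℕ} {s : ℝ} (hΦ : Φ 0 = 0) (ha : a < N) (hs : s ∈ unitInterval) :
    cellwise Φ N v ((a + s) / N) = (v (a / N) - v 0) * Φ 1 + cellIncr v N a * Φ s := by
  have hbelow : ∑ k ∈ Finset.range a, cellIncr v N k * Φ (ramp N k ((a + s) / N)) =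
      (v (a / N) - v 0) * Φ 1 := by
    have htel := Finset.sum_range_sub (fun k : ℕ => v (k / N)) a
    push_cast at htel
    rw [zero_div] at htel
    rw [← htel, Finset.sum_mul]
    refine Finset.sum_congr rfl fun k hk => ?_
    rw [ramp_add_div ha.pos a k hs, if_pos (Finset.mem_range.1 hk), cellIncr]
  rw [cellwise, ← Finset.sum_subset (Finset.range_mono ha), Finset.sum_range_succ, hbelow,
    ramp_add_div ha.pos a a hs, if_neg (lt_irrefl a), if_pos rfl]
  intro k _ hk
  rw [Finset.mem_range] at hk
  rw [ramp_add_div ha.pos a k hs, if_neg (by lia), if_neg (by lia), hΦ, mul_zero]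

lemma cellwise_zero (hΦ : Φ 0 = 0) (v : ℝ → ℝ) (N : ℕ) : cellwise Φ N v 0 = 0 := by
  refine Finset.sum_eq_zero fun k _ => ?_
  have : ramp N k 0 = 0 := max_eq_left ((min_le_right _ _).trans (by simp))
  rw [this, hΦ, mul_zero]

lemma cellwise_one (hΦ : Φ 0 = 0) (hN : 0 < N) : cellwise Φ N v 1 = (v 1 - v 0) * Φ 1 := by
  have hN' : (N : ℝ) ≠ 0 := by exact_mod_cast hN.ne'
  have hlast : (((N - 1 : ℕ) : ℝ) + 1) / N = 1 := by
    rw [Nat.cast_pred hN, sub_add_cancel, div_self hN']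
  rw [← hlast, cellwise_add_div hΦ (Nat.sub_one_lt hN.ne') unitInterval.one_mem, cellIncr, hlast]
  ring

lemma cellwise_congr {v' : ℝ → ℝ} (hv : EqOn v v' unitInterval) (Φ : ℝ → ℝ) (N : ℕ) :
    cellwise Φ N v = cellwise Φ N v' := by
  funext y
  refine Finset.sum_congr rfl fun k hk => ?_
  rw [Finset.mem_range] at hk
  rw [cellIncr, cellIncr, hv (succ_div_natCast_mem_unitInterval hk),
    hv (div_natCast_mem_unitInterval hk.le)]

lemma cellwise_neg (Φ : ℝ → ℝ) (N : ℕ) (v : ℝ → ℝ) (y : ℝ) :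
    cellwise Φ N (fun t => -v t) y = -cellwise Φ N v y := by
  simp only [cellwise, cellIncr, neg_sub_neg, ← Finset.sum_neg_distrib, ← neg_mul, neg_sub]

lemma cellwise_id_add_mul (N : ℕ) (v τ : ℝ → ℝ) (c y : ℝ) :
    cellwise (fun s => s + c * τ s) N v y = cellwise id N v y + c * cellwise τ N v y := by
  simp only [cellwise, Finset.mul_sum, ← Finset.sum_add_distrib, id]
  exact Finset.sum_congr rfl fun k _ => by ring

lemma cellwise_id_id {y : ℝ} (hN : 0 < N) (hy : y ∈ unitInterval) : cellwise id N id y = y := by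
  obtain ⟨a, ha, s, hs, rfl⟩ := exists_eq_add_div hN hy
  rw [cellwise_add_div rfl ha hs, cellIncr]
  simp only [id]
  ring

lemma sum_ramp {y : ℝ} (hN : 0 < N) (hy : y ∈ unitInterval) :
    ∑ k ∈ Finset.range N, ramp N k y = N * y := by
  have hN' : (N : ℝ) ≠ 0 := by exact_mod_cast hN.ne'
  have hincr : ∀ k, cellIncr id N k = 1 / N := fun k => by
    rw [cellIncr, id, id, ← sub_div, add_sub_cancel_left]
  have hsum := cellwise_id_id hN hy
  simp only [cellwise, hincr, id, ← Finset.mul_sum] at hsum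
  rw [← hsum, ← mul_assoc, mul_one_div_cancel hN', one_mul, hsum]

lemma cellwise_sub_mem_Icc {D E c c' y z : ℝ} (hN : 0 < N) (hD : 0 ≤ D) (hc : 0 ≤ c)
    (hv : ∀ k < N, cellIncr v N k ∈ Icc D E)
    (hΦ : ∀ s ∈ unitInterval, ∀ t ∈ unitInterval, s ≤ t →
      Φ t - Φ s ∈ Icc (c * (t - s)) (c' * (t - s)))
    (hy : y ∈ unitInterval) (hz : z ∈ unitInterval) (hyz : y ≤ z) :
    cellwise Φ N v z - cellwise Φ N v y ∈ Icc (D * c * N * (z - y)) (E * c' * N * (z - y)) := by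
  have hsum : ∀ A : ℝ, A * N * (z - y) =
      ∑ k ∈ Finset.range N, A * (ramp N k z - ramp N k y) := fun A => by
    rw [← Finset.mul_sum, Finset.sum_sub_distrib, sum_ramp hN hy, sum_ramp hN hz]
    ring
  have hsub : cellwise Φ N v z - cellwise Φ N v y =
      ∑ k ∈ Finset.range N, cellIncr v N k * (Φ (ramp N k z) - Φ (ramp N k y)) := by
    simp only [cellwise, ← Finset.sum_sub_distrib, mul_sub]
  have hterm : ∀ k ∈ Finset.range N, cellIncr v N k * (Φ (ramp N k z) - Φ (ramp N k y)) ∈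
      Icc (D * c * (ramp N k z - ramp N k y)) (E * c' * (ramp N k z - ramp N k y)) := by
    intro k hk
    obtain ⟨hvD, hvE⟩ := hv k (Finset.mem_range.1 hk)
    have hmono := ramp_monotone N k hyz
    obtain ⟨hlow, hupp⟩ :=
      hΦ _ (ramp_mem_unitInterval N k y) _ (ramp_mem_unitInterval N k z) hmono
    have hlow₀ : 0 ≤ c * (ramp N k z - ramp N k y) := mul_nonneg hc (sub_nonneg.2 hmono)
    rw [mul_assoc, mul_assoc]
    exact ⟨mul_le_mul hvD hlow hlow₀ (hD.trans hvD),
      mul_le_mul hvE hupp (hlow₀.trans hlow) ((hD.trans hvD).trans hvE)⟩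
  rw [hsub, hsum, hsum]
  exact ⟨Finset.sum_le_sum fun k hk => (hterm k hk).1, Finset.sum_le_sum fun k hk => (hterm k hk).2⟩

lemma abs_cellwise_le {E ρ y : ℝ} (hN : 0 < N) (hv : ∀ k < N, |cellIncr v N k| ≤ E)
    (hΦ₀ : Φ 0 = 0) (hΦ₁ : Φ 1 = 0) (hΦ : ∀ s ∈ unitInterval, |Φ s| ≤ ρ)
    (hy : y ∈ unitInterval) : |cellwise Φ N v y| ≤ E * ρ := by
  obtain ⟨a, ha, s, hs, rfl⟩ := exists_eq_add_div hN hy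
  rw [cellwise_add_div hΦ₀ ha hs, hΦ₁, mul_zero, zero_add, abs_mul]
  exact mul_le_mul (hv a ha) (hΦ s hs) (abs_nonneg _) ((abs_nonneg _).trans (hv a ha))

lemma abs_cellwise_id_sub_le {δ y : ℝ} (hN : 0 < N)
    (hv : ∀ y ∈ unitInterval, ∀ z ∈ unitInterval, |z - y| ≤ 1 / N → |v z - v y| ≤ δ)
    (hy : y ∈ unitInterval) : |cellwise id N v y - (v y - v 0)| ≤ δ := by
  obtain ⟨a, ha, s, hs, rfl⟩ := exists_eq_add_div hN hy
  have hN' : (0 : ℝ) < N := by exact_mod_cast hN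
  have hs' : 0 ≤ 1 - s := sub_nonneg.2 hs.2
  have hl : |v (a / N) - v ((a + s) / N)| ≤ δ := by
    refine hv _ hy _ (div_natCast_mem_unitInterval ha.le) ?_
    rw [← sub_div, sub_add_cancel_left, abs_div, abs_neg, abs_of_nonneg hs.1, abs_of_pos hN']
    gcongr
    exact hs.2
  have hr : |v ((a + 1) / N) - v ((a + s) / N)| ≤ δ := by
    refine hv _ hy _ (succ_div_natCast_mem_unitInterval ha) ?_
    rw [← sub_div, add_sub_add_left_eq_sub, abs_div, abs_of_nonneg hs', abs_of_pos hN']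
    gcongr
    linarith [hs.1]
  rw [cellwise_add_div rfl ha hs, cellIncr]
  calc |(v (a / N) - v 0) * 1 + (v ((a + 1) / N) - v (a / N)) * s - (v ((a + s) / N) - v 0)|
      = |(1 - s) * (v (a / N) - v ((a + s) / N)) + s * (v ((a + 1) / N) - v ((a + s) / N))| := by
        ring_nf
    _ ≤ (1 - s) * δ + s * δ := by
        refine (abs_add_le _ _).trans ?_
        rw [abs_mul, abs_mul, abs_of_nonneg hs', abs_of_nonneg hs.1]
        gcongr
        exact hs.1
    _ = δ := by ring

lemma cellIncr_cellwise {R i : ℕ} (hΦ : Φ 0 = 0) (hi : i < N * R) :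
    cellIncr (cellwise Φ N v) (N * R) i = cellIncr v N (i / R) * cellIncr Φ R (i % R) := by
  have hR : 0 < R := Nat.pos_of_mul_pos_left hi.pos
  have hR' : (R : ℝ) ≠ 0 := by exact_mod_cast hR.ne'
  have hN : 0 < N := Nat.pos_of_mul_pos_right hi.pos
  have hN' : (N : ℝ) ≠ 0 := by exact_mod_cast hN.ne'
  have ha : i / R < N := Nat.div_lt_of_lt_mul (by rwa [mul_comm])
  have hr : i % R < R := Nat.mod_lt _ hR
  have hi' : (i : ℝ) = R * (i / R : ℕ) + (i % R : ℕ) := by exact_mod_cast (Nat.div_add_mod i R).symm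
  have hleft : (i : ℝ) / (N * R : ℕ) = ((i / R : ℕ) + (i % R : ℕ) / R) / N := by
    rw [hi']
    push_cast
    field_simp
  have hright : ((i : ℝ) + 1) / (N * R : ℕ) = ((i / R : ℕ) + ((i % R : ℕ) + 1) / R) / N := by
    rw [hi']
    push_cast
    field_simp
    ring
  rw [cellIncr, hleft, hright, cellwise_add_div hΦ ha (succ_div_natCast_mem_unitInterval hr),
    cellwise_add_div hΦ ha (div_natCast_mem_unitInterval hr.le), add_sub_add_left_eq_sub, ← mul_sub,
    ← cellIncr]

end cellwise

section interpolation

variable {ω v : ℝ → ℝ} {N : ℕ} {y z : ℝ}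

lemma combo_three_le_of_concaveOn {p θ q l l' A A' B : ℝ} (hω : ConcaveOn ℝ (Ici 0) ω)
    (hl : 0 ≤ l) (hl' : 0 ≤ l') (hp : 0 ≤ p) (hθ : 0 ≤ θ) (hq : 0 ≤ q) (hsum : p + θ + q = 1)
    (hA : A ≤ ω l) (hB : B ≤ ω l') (hA' : A' ≤ ω l) :
    p * A + θ * B + q * A' ≤ ω ((1 - θ) * l + θ * l') := by
  obtain rfl : p = 1 - θ - q := by linarith
  calc (1 - θ - q) * A + θ * B + q * A' ≤ (1 - θ - q) * ω l + θ * ω l' + q * ω l := by gcongr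
    _ = (1 - θ) * ω l + θ * ω l' := by ring
    _ ≤ ω ((1 - θ) * l + θ * l') := by
      simpa only [smul_eq_mul] using hω.2 hl hl' (by linarith) hθ (sub_add_cancel 1 θ)

/- In both orders of `s` and `t` the increment is a convex combination of three increments between
nodes, over distances which take two values with weighted mean `b + t - (a + s)`. -/
lemma linear_interpolation_sub_le {u : ℕ → ℝ} {a b : ℕ} {s t : ℝ} (hω : ConcaveOn ℝ (Ici 0) ω)
    (hu : ∀ p q, p ≤ q → q ≤ b + 1 → u q - u p ≤ ω (q - p)) (hs : s ∈ unitInterval)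
    (ht : t ∈ unitInterval) (hlt : a + s < b + t) :
    u b + (u (b + 1) - u b) * t - (u a + (u (a + 1) - u a) * s) ≤ ω (b + t - (a + s)) := by
  have hab : a ≤ b := by
    by_contra! hba
    have : (b : ℝ) + 1 ≤ a := by exact_mod_cast hba
    linarith [hs.1, ht.2]
  have hab' : (a : ℝ) ≤ b := by exact_mod_cast hab
  have hleft := hu a b hab (by lia)
  have hright : u (b + 1) - u (a + 1) ≤ ω (b - a) := by
    simpa using hu (a + 1) (b + 1) (by lia) le_rfl
  rcases le_or_gt s t with hst | hst
  · have hlong := hu a (b + 1) (by lia) le_rfl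
    push_cast at hlong
    calc u b + (u (b + 1) - u b) * t - (u a + (u (a + 1) - u a) * s)
        = (1 - t) * (u b - u a) + (t - s) * (u (b + 1) - u a)
            + s * (u (b + 1) - u (a + 1)) := by ring
      _ ≤ ω ((1 - (t - s)) * (b - a) + (t - s) * (b + 1 - a)) :=
        combo_three_le_of_concaveOn hω (by linarith) (by linarith) (sub_nonneg.2 ht.2)
          (sub_nonneg.2 hst) hs.1 (by ring) hleft hlong hright
      _ = ω (b + t - (a + s)) := by ring_nf
  · have hab₁ : a + 1 ≤ b := by
      by_contra! hba
      have : (b : ℝ) ≤ a := by exact_mod_cast Nat.lt_succ_iff.1 hba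
      linarith
    have hab₁' : (a : ℝ) + 1 ≤ b := by exact_mod_cast hab₁
    have hshort := hu (a + 1) b hab₁ (by lia)
    push_cast at hshort
    calc u b + (u (b + 1) - u b) * t - (u a + (u (a + 1) - u a) * s)
        = (1 - s) * (u b - u a) + (s - t) * (u b - u (a + 1))
            + t * (u (b + 1) - u (a + 1)) := by ring
      _ ≤ ω ((1 - (s - t)) * (b - a) + (s - t) * (b - (a + 1))) :=
        combo_three_le_of_concaveOn hω (by linarith) (by linarith) (sub_nonneg.2 hs.2)
          (sub_nonneg.2 hst.le) ht.1 (by ring) hleft hshort hright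
      _ = ω (b + t - (a + s)) := by ring_nf

lemma cellwise_id_sub_le (hω : ConcaveOn ℝ (Ici 0) ω) (hN : 0 < N)
    (hv : ∀ y ∈ unitInterval, ∀ z ∈ unitInterval, y ≤ z → v z - v y ≤ ω (z - y))
    (hy : y ∈ unitInterval) (hz : z ∈ unitInterval) (hyz : y ≤ z) :
    cellwise id N v z - cellwise id N v y ≤ ω (z - y) := by
  rcases hyz.eq_or_lt with rfl | hlt
  · simpa using hv y hy y hy le_rfl
  have hN' : (0 : ℝ) < N := by exact_mod_cast hN
  obtain ⟨a, ha, s, hs, rfl⟩ := exists_eq_add_div hN hy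
  obtain ⟨b, hb, t, ht, rfl⟩ := exists_eq_add_div hN hz
  have hscale : ConcaveOn ℝ (Ici 0) fun l => ω (l / N) := by
    refine ⟨convex_Ici 0, fun x hx y hy c d hc hd hcd => ?_⟩
    have := hω.2 (div_nonneg hx hN'.le) (div_nonneg hy hN'.le) hc hd hcd
    simpa only [smul_eq_mul, mul_div_assoc, add_div] using this
  have hnode : ∀ p q : ℕ, p ≤ q → q ≤ b + 1 → v (q / N) - v (p / N) ≤ ω (((q : ℝ) - p) / N) := by
    intro p q hpq hq
    rw [sub_div]
    refine hv _ (div_natCast_mem_unitInterval (by lia)) _ (div_natCast_mem_unitInterval (by lia)) ?_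
    gcongr
  have := linear_interpolation_sub_le hscale hnode hs ht ((div_lt_div_iff_of_pos_right hN').1 hlt)
  push_cast at this
  rw [cellwise_add_div rfl ha hs, cellwise_add_div rfl hb ht, cellIncr, cellIncr, ← sub_div]
  simp only [id]
  linarith

end interpolation

lemma BiHolderMono.cellwise_id {C β : ℝ} {v : ℝ → ℝ} {N : ℕ} (hC : 0 < C) (hβ₀ : 0 < β)
    (hβ₁ : β ≤ 1) (hN : 0 < N) (hv : BiHolderMono C β v) : BiHolderMono C β (cellwise id N v) := by
  intro y hy z hz hyz
  constructor
  · have hω : ConcaveOn ℝ (Ici 0) fun l : ℝ => -(C⁻¹ • l ^ (1 / β)) :=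
      ((convexOn_rpow ((one_le_div hβ₀).2 hβ₁)).smul (inv_nonneg.2 hC.le)).neg
    have := cellwise_id_sub_le (v := fun t => -v t) hω hN
      (fun y hy z hz hyz => by linarith [(hv hy hz hyz).1, smul_eq_mul C⁻¹ ((z - y) ^ (1 / β))])
      hy hz hyz
    rw [cellwise_neg, cellwise_neg, smul_eq_mul] at this
    linarith
  · exact cellwise_id_sub_le ((Real.concaveOn_rpow hβ₀.le hβ₁).smul hC.le) hN
      (fun y hy z hz hyz => (hv hy hz hyz).2) hy hz hyz

lemma eventually_mul_rpow_le_mul_rpow {r q B : ℝ} (A : ℝ) (hrq : r < q) (hB : 0 < B) :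
    ∀ᶠ Δ : ℝ in 𝓝[>] 0, A * Δ ^ q ≤ B * Δ ^ r := by
  have hlim : Tendsto (fun Δ : ℝ => A * Δ ^ (q - r)) (𝓝[>] 0) (𝓝 0) := by
    have hcont : Continuous fun Δ : ℝ => A * Δ ^ (q - r) := by
      fun_prop (disch := exact (sub_pos.2 hrq).le)
    refine (hcont.tendsto' 0 0 ?_).mono_left nhdsWithin_le_nhds
    rw [Real.zero_rpow (sub_pos.2 hrq).ne', mul_zero]
  filter_upwards [hlim.eventually (gt_mem_nhds hB), self_mem_nhdsWithin] with Δ hΔ hpos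
  rw [← sub_add_cancel q r, Real.rpow_add hpos, ← mul_assoc]
  exact mul_le_mul_of_nonneg_right hΔ.le (Real.rpow_nonneg (le_of_lt hpos) r)

/- At small scales `w` satisfies the Hölder bounds because it is bi-Lipschitz, at large scales
because it is uniformly close to `v`. -/
lemma BiHolderMono.eventually_of_abs_sub_le {C C₁ β p : ℝ} (P : ℝ) (hC₁ : 0 < C₁) (hCC : C₁ < C)
    (hβ₀ : 0 < β) (hβ₁ : β < 1) (hp : 0 < p) :
    ∀ᶠ ρ : ℝ in 𝓝 0, ∀ v w : ℝ → ℝ, BiHolderMono C₁ β v →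
      (∀ y ∈ unitInterval, ∀ z ∈ unitInterval, y ≤ z →
        w z - w y ∈ Icc (p * (z - y)) (P * (z - y))) →
      (∀ y ∈ unitInterval, |w y - v y| ≤ ρ) → BiHolderMono C β w := by
  have hC : 0 < C := hC₁.trans hCC
  have hCinv : 0 < C₁⁻¹ - C⁻¹ := sub_pos.2 (by gcongr)
  have hsmall : ∀ᶠ Δ : ℝ in 𝓝[>] 0, C⁻¹ * Δ ^ (1 / β) ≤ p * Δ ∧ P * Δ ≤ C * Δ ^ β := by
    simpa only [Real.rpow_one] using (eventually_mul_rpow_le_mul_rpow C⁻¹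
      ((one_lt_div hβ₀).2 hβ₁) hp).and (eventually_mul_rpow_le_mul_rpow P hβ₁ hC)
  obtain ⟨d, hd, hsmall⟩ := (nhdsGT_basis (0 : ℝ)).eventually_iff.1 hsmall
  have hlarge : ∀ᶠ ρ : ℝ in 𝓝 0,
      2 * ρ ≤ (C₁⁻¹ - C⁻¹) * d ^ (1 / β) ∧ 2 * ρ ≤ (C - C₁) * d ^ β := by
    have hlim : Tendsto (fun ρ : ℝ => 2 * ρ) (𝓝 0) (𝓝 0) :=
      (continuous_const_mul 2).tendsto' 0 0 (mul_zero 2)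
    exact (hlim.eventually (ge_mem_nhds (by positivity))).and
      (hlim.eventually (ge_mem_nhds (mul_pos (sub_pos.2 hCC) (by positivity))))
  filter_upwards [hlarge] with ρ hρ v w hv hw hvw y hy z hz hyz
  rcases hyz.eq_or_lt with rfl | hlt
  · simp [Real.zero_rpow hβ₀.ne', Real.zero_rpow (inv_ne_zero hβ₀.ne')]
  obtain ⟨hlow, hupp⟩ := hw y hy z hz hyz
  rcases lt_or_ge (z - y) d with hzy | hzy
  · obtain ⟨hlow', hupp'⟩ := hsmall ⟨sub_pos.2 hlt, hzy⟩
    exact ⟨hlow'.trans hlow, hupp.trans hupp'⟩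
  · obtain ⟨hvlow, hvupp⟩ := hv hy hz hyz
    have hy' := abs_le.1 (hvw y hy)
    have hz' := abs_le.1 (hvw z hz)
    have hdlow : (C₁⁻¹ - C⁻¹) * d ^ (1 / β) ≤ (C₁⁻¹ - C⁻¹) * (z - y) ^ (1 / β) := by gcongr
    have hdupp : (C - C₁) * d ^ β ≤ (C - C₁) * (z - y) ^ β := by gcongr
    constructor <;> linarith

/-- The function `v = f x` interpolated linearly on each cell, plus `σ x` times the profile `τ`
repeated on all cells: the perturbation of `f` for which the leaves oscillate, in each cell, with
amplitude `σ x`. -/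
def oscillate (N : ℕ) (σ τ : ℝ → ℝ) (f : ℝ → ℝ → ℝ) (x y : ℝ) : ℝ :=
  cellwise (fun s => s + σ x * τ s) N (f x) y

/-- The partial derivative in `x` of `oscillate N σ τ f`, where `fx` is that of `f`. -/
def oscillateDeriv (N : ℕ) (σ τ : ℝ → ℝ) (f fx : ℝ → ℝ → ℝ) (x y : ℝ) : ℝ :=
  cellwise id N (fx x) y +
    (deriv σ x * cellwise τ N (f x) y + σ x * cellwise τ N (fx x) y)

lemma oscillate_eq (N : ℕ) (σ τ : ℝ → ℝ) (f : ℝ → ℝ → ℝ) (x y : ℝ) :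
    oscillate N σ τ f x y = cellwise id N (f x) y + σ x * cellwise τ N (f x) y :=
  cellwise_id_add_mul N (f x) τ (σ x) y

lemma hasDerivWithinAt_cellwise {f fx : ℝ → ℝ → ℝ} {S : Set ℝ} {x : ℝ}
    (hf : ∀ y ∈ unitInterval, HasDerivWithinAt (fun x' => f x' y) (fx x y) S x)
    (Φ : ℝ → ℝ) (N : ℕ) (y : ℝ) :
    HasDerivWithinAt (fun x' => cellwise Φ N (f x') y) (cellwise Φ N (fx x) y) S x := by
  refine HasDerivWithinAt.fun_sum fun k hk => HasDerivWithinAt.mul_const ?_ _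
  rw [Finset.mem_range] at hk
  exact (hf _ (succ_div_natCast_mem_unitInterval hk)).sub
    (hf _ (div_natCast_mem_unitInterval hk.le))

lemma continuousOn_cellwise {f : ℝ → ℝ → ℝ} {Φ : ℝ → ℝ} {S : Set ℝ} (T : Set ℝ)
    (hf : ∀ y ∈ unitInterval, ContinuousOn (fun x => f x y) S) (hΦ : Continuous Φ) (N : ℕ) :
    ContinuousOn (fun p : ℝ × ℝ => cellwise Φ N (f p.1) p.2) (S ×ˢ T) := by
  refine continuousOn_finsetSum _ fun k hk => ContinuousOn.mul ?_ ?_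
  · rw [Finset.mem_range] at hk
    exact ((hf _ (succ_div_natCast_mem_unitInterval hk)).comp continuousOn_fst fun p hp => hp.1).sub
      ((hf _ (div_natCast_mem_unitInterval hk.le)).comp continuousOn_fst fun p hp => hp.1)
  · exact (hΦ.comp ((continuous_ramp N k).comp continuous_snd)).continuousOn

lemma add_mul_sub_mem_Icc {τ : ℝ → ℝ} {c κ s t : ℝ} (hτ : LipschitzWith 1 τ) (hc : |c| ≤ κ)
    (hκ : κ ≤ 1) (hst : s ≤ t) :
    (t + c * τ t) - (s + c * τ s) ∈ Icc ((1 - κ) * (t - s)) (2 * (t - s)) := by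
  have hslope : |c * (τ t - τ s)| ≤ κ * (t - s) := by
    have hlip := hτ.dist_le_mul t s
    rw [NNReal.coe_one, one_mul, Real.dist_eq, Real.dist_eq, abs_of_nonneg (sub_nonneg.2 hst)]
      at hlip
    rw [abs_mul]
    exact mul_le_mul hc hlip (abs_nonneg _) ((abs_nonneg _).trans hc)
  obtain ⟨hlow, hupp⟩ := abs_le.1 hslope
  constructor <;> nlinarith

namespace IsFol

variable {C C₁ β : ℝ} {f fx : ℝ → ℝ → ℝ} {σ : ℝ → ℝ} {N : ℕ}

lemma abs_cellwise_le {τ : ℝ → ℝ} {ρ x y : ℝ} (hβ : 0 < β) (h : IsFol C β f fx) (hN : 0 < N)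
    (hτ₀ : τ 0 = 0) (hτ₁ : τ 1 = 0) (hτ : ∀ s ∈ unitInterval, |τ s| ≤ ρ)
    (hx : x ∈ unitInterval) (hy : y ∈ unitInterval) : |cellwise τ N (f x) y| ≤ ρ := by
  refine (_root_.abs_cellwise_le (E := 1) hN (fun k hk => ?_) hτ₀ hτ₁ hτ hy).trans_eq (one_mul ρ)
  obtain ⟨h₀, h₁⟩ := h.cellIncr_mem_unitInterval hβ hk hx
  rwa [abs_of_nonneg h₀]

lemma eventually_biHolderMono_oscillate (hβ₀ : 0 < β) (hβ₁ : β < 1) (hCC : C₁ < C)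
    (h : IsFol C₁ β f fx) (hN : 0 < N) (hσ : ContinuousOn σ unitInterval)
    (hσ₁ : ∀ x ∈ unitInterval, |σ x| < 1) :
    ∀ᶠ ρ : ℝ in 𝓝 0, ∀ τ : ℝ → ℝ, LipschitzWith 1 τ → τ 0 = 0 → τ 1 = 0 →
      (∀ s ∈ unitInterval, |τ s| ≤ ρ) →
      ∀ x ∈ unitInterval, BiHolderMono C β (oscillate N σ τ f x) := by
  have : (0 : ℝ) < N := by exact_mod_cast hN
  have hC₁ := h.const_pos
  obtain ⟨x₀, hx₀, hmax⟩ := isCompact_Icc.exists_isMaxOn ⟨0, unitInterval.zero_mem⟩ hσ.abs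
  set κ := |σ x₀|
  set D := C₁⁻¹ * (1 / N : ℝ) ^ (1 / β)
  have hκ : 0 < 1 - κ := sub_pos.2 (hσ₁ x₀ hx₀)
  have hp : 0 < D * (1 - κ) * N := by positivity
  filter_upwards [BiHolderMono.eventually_of_abs_sub_le (1 * 2 * N) hC₁ hCC hβ₀ hβ₁ hp]
    with ρ hρ τ hτ hτ₀ hτ₁ hτρ x hx
  refine hρ _ _ ((h.biHolderMono hβ₀ hx).cellwise_id hC₁ hβ₀ hβ₁.le hN)
    (fun y hy z hz hyz => ?_) fun y hy => ?_
  · refine cellwise_sub_mem_Icc hN (by positivity) hκ.le (fun k hk => ?_)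
      (fun s _ t _ hst => add_mul_sub_mem_Icc hτ (hmax hx) (sub_pos.1 hκ).le hst) hy hz hyz
    exact ⟨(h.biHolderMono hβ₀ hx).le_cellIncr hk, (h.cellIncr_mem_unitInterval hβ₀ hk hx).2⟩
  · rw [oscillate_eq, add_sub_cancel_left, abs_mul]
    exact (mul_le_of_le_one_left (abs_nonneg _) (hσ₁ x hx).le).trans
      (h.abs_cellwise_le hβ₀ hN hτ₀ hτ₁ hτρ hx hy)

lemma eventually_isFol_oscillate (hβ₀ : 0 < β) (hβ₁ : β < 1) (hCC : C₁ < C)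
    (h : IsFol C₁ β f fx) (hN : 0 < N) (hσ : ContDiff ℝ 1 σ) (hσ₀ : σ 0 = 0)
    (hσ₁ : ∀ x ∈ unitInterval, |σ x| < 1) :
    ∀ᶠ ρ : ℝ in 𝓝 0, ∀ τ : ℝ → ℝ, LipschitzWith 1 τ → τ 0 = 0 → τ 1 = 0 →
      (∀ s ∈ unitInterval, |τ s| ≤ ρ) →
      IsFol C β (oscillate N σ τ f) (oscillateDeriv N σ τ f fx) := by
  filter_upwards [h.eventually_biHolderMono_oscillate hβ₀ hβ₁ hCC hN hσ.continuous.continuousOn hσ₁]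
    with ρ hρ τ hτ hτ₀ hτ₁ hτρ
  have hfx : ∀ y ∈ unitInterval, ContinuousOn (fun x => fx x y) unitInterval := fun y hy =>
    h.derivCont.comp (continuousOn_id.prodMk continuousOn_const) fun x hx => ⟨hx, hy⟩
  refine of_biHolderMono (h.const_pos.trans hCC) (hρ τ hτ hτ₀ hτ₁ hτρ) (fun y _ x hx => ?_) ?_
    (fun y hy => ?_) (fun x _ => ?_) fun x hx => ?_
  · simp only [oscillate_eq, oscillateDeriv]
    have hf := fun y hy => h.hasDeriv y hy x hx
    exact (hasDerivWithinAt_cellwise hf id N y).add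
      (((hσ.differentiable one_ne_zero x).hasDerivAt.hasDerivWithinAt).mul
        (hasDerivWithinAt_cellwise hf τ N y))
  · have hdσ : Continuous fun p : ℝ × ℝ => deriv σ p.1 :=
      (hσ.continuous_deriv le_rfl).comp continuous_fst
    exact (continuousOn_cellwise _ hfx continuous_id N).add
      ((hdσ.continuousOn.mul (continuousOn_cellwise _ (fun y hy => h.continuousOn_fst hy)
        hτ.continuous N)).add ((hσ.continuous.comp continuous_fst).continuousOn.mul
          (continuousOn_cellwise _ hfx hτ.continuous N)))
  · rw [oscillate_eq, hσ₀, zero_mul, add_zero, cellwise_congr (v' := id) fun y hy => h.eq_id y hy]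
    exact cellwise_id_id hN hy
  · exact cellwise_zero (by rw [hτ₀, mul_zero, add_zero]) _ _
  · rw [oscillate, cellwise_one (by rw [hτ₀, mul_zero, add_zero]) hN, h.eq_top x hx, h.eq_bot x hx,
      hτ₁]
    ring

lemma eventually_abs_oscillateDeriv_sub_le {δ δ' : ℝ} (hβ : 0 < β) (h : IsFol C β f fx)
    (hN : 0 < N) (hσ : ContDiff ℝ 1 σ) (hσ₁ : ∀ x ∈ unitInterval, |σ x| ≤ 1)
    (hfx : ∀ x ∈ unitInterval, ∀ y ∈ unitInterval, ∀ z ∈ unitInterval, |z - y| ≤ 1 / N →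
      |fx x z - fx x y| ≤ δ) (hδ : δ < δ') :
    ∀ᶠ ρ : ℝ in 𝓝 0, ∀ τ : ℝ → ℝ, τ 0 = 0 → τ 1 = 0 → (∀ s ∈ unitInterval, |τ s| ≤ ρ) →
      ∀ x ∈ unitInterval, ∀ y ∈ unitInterval, |oscillateDeriv N σ τ f fx x y - fx x y| ≤ δ' := by
  obtain ⟨K, hK⟩ := h.exists_abs_deriv_le
  obtain ⟨S, hS⟩ := isCompact_Icc.exists_bound_of_continuousOn (s := unitInterval)
    (hσ.continuous_deriv le_rfl).continuousOn
  have hlim : Tendsto (fun ρ : ℝ => δ + (S * ρ + 1 * (2 * K * ρ))) (𝓝 0) (𝓝 δ) :=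
    Continuous.tendsto' (by fun_prop) 0 δ (by ring)
  filter_upwards [hlim.eventually (ge_mem_nhds hδ)] with ρ hρ τ hτ₀ hτ₁ hτρ x hx y hy
  refine le_trans ?_ hρ
  have hinterp := abs_cellwise_id_sub_le hN (hfx x hx) hy
  rw [h.deriv_zero hx, sub_zero] at hinterp
  have hincr : ∀ k < N, |cellIncr (fx x) N k| ≤ 2 * K := fun k hk => by
    refine (abs_sub _ _).trans ?_
    linarith [hK x hx _ (succ_div_natCast_mem_unitInterval hk),
      hK x hx _ (div_natCast_mem_unitInterval hk.le)]
  have hosc := _root_.abs_cellwise_le hN hincr hτ₀ hτ₁ hτρ hy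
  have hosc' := h.abs_cellwise_le hβ hN hτ₀ hτ₁ hτρ hx hy
  calc |oscillateDeriv N σ τ f fx x y - fx x y|
      = |(cellwise id N (fx x) y - fx x y) +
          (deriv σ x * cellwise τ N (f x) y + σ x * cellwise τ N (fx x) y)| := by
        rw [oscillateDeriv, add_sub_right_comm]
    _ ≤ |cellwise id N (fx x) y - fx x y| +
          (|deriv σ x| * |cellwise τ N (f x) y| + |σ x| * |cellwise τ N (fx x) y|) := by
        rw [← abs_mul, ← abs_mul]
        exact (abs_add_le _ _).trans (by gcongr; exact abs_add_le _ _)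
    _ ≤ δ + (S * ρ + 1 * (2 * K * ρ)) := by
        gcongr
        exacts [(abs_nonneg _).trans (hS x hx), hS x hx, hσ₁ x hx]

end IsFol

/-- The distance from `s` to the nearest multiple of `1/L`: a zigzag of slopes `±1` and height
`1/(2L)`, monotone on each interval `[k/(2L), (k+1)/(2L)]`. It is the profile of the oscillation
that pushes foliations into `B_{m,I}`. -/
def triangleWave (L : ℕ) (s : ℝ) : ℝ := |L * s - round (L * s)| / L

section triangleWave

variable {L : ℕ}

lemma lipschitzWith_triangleWave (hL : 0 < L) : LipschitzWith 1 (triangleWave L) := by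
  have hL' : (0 : ℝ) < L := by exact_mod_cast hL
  refine LipschitzWith.of_le_add fun s t => ?_
  calc |L * s - round (L * s)| / L ≤ (|L * t - round (L * t)| + L * |s - t|) / L := by
        gcongr
        calc |L * s - round (L * s)| ≤ |L * s - round (L * t)| := round_le _ _
          _ = |(L * t - round (L * t)) + L * (s - t)| := by ring_nf
          _ ≤ |L * t - round (L * t)| + |L * (s - t)| := abs_add_le _ _
          _ = _ := by rw [abs_mul, abs_of_pos hL']
    _ = triangleWave L t + dist s t := by
        rw [add_div, mul_div_cancel_left₀ _ hL'.ne', Real.dist_eq, triangleWave]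

lemma abs_triangleWave_le (L : ℕ) (s : ℝ) : |triangleWave L s| ≤ 1 / 2 / L := by
  rw [triangleWave, abs_div, abs_abs, Nat.abs_cast]
  gcongr
  exact abs_sub_round _

lemma triangleWave_div (hL : 0 < L) (k : ℕ) :
    triangleWave L (k / ((2 * L : ℕ) : ℝ)) = if Even k then 0 else 1 / ((2 * L : ℕ) : ℝ) := by
  have hL' : (L : ℝ) ≠ 0 := by exact_mod_cast hL.ne'
  have hk : (L : ℝ) * (k / (2 * L : ℕ)) = k / 2 := by
    push_cast
    field_simp
  rw [triangleWave, hk]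
  split_ifs with heven
  · obtain ⟨j, rfl⟩ := heven
    rw [Nat.cast_add, ← two_mul, mul_div_cancel_left₀ _ two_ne_zero, round_natCast]
    simp
  · obtain ⟨j, rfl⟩ := Nat.not_even_iff_odd.1 heven
    have hj : ((2 * j + 1 : ℕ) : ℝ) / 2 = 2⁻¹ + j := by
      push_cast
      ring
    rw [hj, round_add_natCast, round_two_inv]
    push_cast
    rw [add_sub_add_right_eq_sub, abs_of_neg (by norm_num)]
    ring

lemma cellIncr_add_mul_triangleWave (hL : 0 < L) (c : ℝ) (r : ℕ) :
    cellIncr (fun s => s + c * triangleWave L s) (2 * L) r =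
      1 / (2 * L : ℕ) * if Even r then 1 + c else 1 - c := by
  have hsucc := triangleWave_div hL (r + 1)
  rw [Nat.cast_succ] at hsucc
  rw [cellIncr, triangleWave_div hL, hsucc]
  by_cases heven : Even r <;> simp only [Nat.even_add_one, heven, not_true, not_false_eq_true,
    if_true, if_false] <;> ring

end triangleWave

lemma triangleWave_zero (L : ℕ) : triangleWave L 0 = 0 := by
  simp [triangleWave]

lemma triangleWave_one (L : ℕ) : triangleWave L 1 = 0 := by
  simp [triangleWave]

/- Each cell of the refined grid lies over one monotone piece of the wave. -/
lemma cellIncr_oscillate {N L i : ℕ} (σ : ℝ → ℝ) (f : ℝ → ℝ → ℝ) (x : ℝ) (hi : i < N * (2 * L)) :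
    cellIncr (oscillate N σ (triangleWave L) f x) (N * (2 * L)) i =
      1 / (2 * L : ℕ) * (cellIncr (f x) N (i / (2 * L)) *
        if Even (i % (2 * L)) then 1 + σ x else 1 - σ x) := by
  have hL : 0 < L := Nat.pos_of_mul_pos_left (Nat.pos_of_mul_pos_left hi.pos)
  have hΦ : (0 : ℝ) + σ x * triangleWave L 0 = 0 := by rw [triangleWave_zero, mul_zero, add_zero]
  have hcell := cellIncr_cellwise (v := f x) (Φ := fun s => s + σ x * triangleWave L s) hΦ hi
  rw [cellIncr_add_mul_triangleWave hL] at hcell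
  exact hcell.trans (mul_left_comm _ _ _)

/-! ### Redistributing the area -/

lemma abs_two_div_pi_mul_arctan_lt_one (t : ℝ) : |2 / Real.pi * Real.arctan t| < 1 := by
  have harctan : |Real.arctan t| < Real.pi / 2 :=
    abs_lt.2 ⟨by linarith [Real.neg_pi_div_two_lt_arctan t], Real.arctan_lt_pi_div_two t⟩
  rw [abs_mul, abs_of_pos (div_pos two_pos Real.pi_pos)]
  calc 2 / Real.pi * |Real.arctan t| < 2 / Real.pi * (Real.pi / 2) := by gcongr
    _ = 1 := by field_simp

lemma tendsto_integral_one_sub_two_div_pi_mul_arctan {X : Type*} [MeasurableSpace X]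
    {μ : Measure X} [IsFiniteMeasure μ] {u : X → ℝ} (hu : AEStronglyMeasurable u μ)
    (hpos : ∀ᵐ x ∂μ, 0 < u x) :
    Tendsto (fun K : ℝ => ∫ x, (1 - 2 / Real.pi * Real.arctan (K * u x)) ∂μ) atTop (𝓝 0) := by
  rw [← integral_zero X ℝ (μ := μ)]
  refine tendsto_integral_filter_of_dominated_convergence (fun _ => 2)
    (Eventually.of_forall fun K => ?_)
    (Eventually.of_forall fun K => Eventually.of_forall fun x => ?_) (integrable_const 2) ?_
  · exact aestronglyMeasurable_const.sub ((Real.continuous_arctan.comp_aestronglyMeasurable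
      (hu.const_mul K)).const_mul _)
  · rw [Real.norm_eq_abs]
    refine (abs_sub _ _).trans ?_
    linarith [abs_two_div_pi_mul_arctan_lt_one (K * u x), abs_one (α := ℝ)]
  · filter_upwards [hpos] with x hx
    have harctan := ((Real.tendsto_arctan_atTop.mono_right nhdsWithin_le_nhds).comp
      (tendsto_id.atTop_mul_const hx)).const_mul (2 / Real.pi)
    have hlim : 1 - 2 / Real.pi * (Real.pi / 2) = 0 := by
      rw [div_mul_div_cancel₀ Real.pi_ne_zero, div_self two_ne_zero, sub_self]
    exact hlim ▸ harctan.const_sub 1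

section bumpSign

variable {a b : ℝ}

lemma ae_mul_sub_mul_sub_pos (hJ : Icc a b ⊆ unitInterval) :
    ∀ᵐ x ∂volume.restrict (Icc a b), 0 < x * ((x - a) * (b - x)) := by
  rw [ae_restrict_iff' measurableSet_Icc]
  filter_upwards [volume.ae_ne 0, volume.ae_ne a, volume.ae_ne b] with x h₀ ha hb hx
  exact mul_pos ((hJ hx).1.lt_of_ne' h₀)
    (mul_pos (sub_pos.2 (hx.1.lt_of_ne' ha)) (sub_pos.2 (hx.2.lt_of_ne hb)))

lemma ae_neg_mul_sub_mul_sub_pos (hab : a ≤ b) :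
    ∀ᵐ x ∂volume.restrict (unitInterval \ Icc a b), 0 < -(x * ((x - a) * (b - x))) := by
  rw [ae_restrict_iff' (measurableSet_Icc.diff measurableSet_Icc)]
  filter_upwards [volume.ae_ne 0] with x h₀ hx
  rw [neg_pos]
  refine mul_neg_of_pos_of_neg (hx.1.1.lt_of_ne' h₀) ?_
  rcases lt_or_ge x a with hxa | hax
  · exact mul_neg_of_neg_of_pos (sub_neg.2 hxa) (sub_pos.2 (hxa.trans_le hab))
  · have hbx : b < x := lt_of_not_ge fun hxb => hx.2 ⟨hax, hxb⟩
    exact mul_neg_of_pos_of_neg (sub_pos.2 (hab.trans_lt hbx)) (sub_neg.2 hbx)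

lemma exists_contDiff_near_one_neg_one {e : ℝ} (hab : a ≤ b) (hJ : Icc a b ⊆ unitInterval)
    (he : 0 < e) : ∃ σ : ℝ → ℝ, ContDiff ℝ 1 σ ∧ σ 0 = 0 ∧ (∀ x, |σ x| < 1) ∧
      ∫ x in Icc a b, (1 - σ x) ≤ e ∧ ∫ x in unitInterval \ Icc a b, (1 + σ x) ≤ e := by
  have hsmooth : ContDiff ℝ 1 fun x : ℝ => x * ((x - a) * (b - x)) := by fun_prop
  have hfin : IsFiniteMeasure (volume.restrict (unitInterval \ Icc a b)) :=
    isFiniteMeasure_restrict.2 ((measure_mono sdiff_subset).trans_lt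
      isCompact_Icc.measure_lt_top).ne
  have hin := tendsto_integral_one_sub_two_div_pi_mul_arctan
    hsmooth.continuous.aestronglyMeasurable (ae_mul_sub_mul_sub_pos hJ)
  have hout := tendsto_integral_one_sub_two_div_pi_mul_arctan
    hsmooth.continuous.neg.aestronglyMeasurable (ae_neg_mul_sub_mul_sub_pos hab)
  obtain ⟨K, hKin, hKout⟩ :=
    ((hin.eventually_le_const he).and (hout.eventually_le_const he)).exists
  simp only [Pi.neg_apply, mul_neg, Real.arctan_neg, sub_neg_eq_add] at hKout
  refine ⟨fun x => 2 / Real.pi * Real.arctan (K * (x * ((x - a) * (b - x)))), ?_, ?_,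
    fun x => abs_two_div_pi_mul_arctan_lt_one _, hKin, hKout⟩
  · exact contDiff_const.mul (contDiff_const.mul hsmooth).arctan
  · simp

end bumpSign

lemma isLight_mul {d s : ℝ → ℝ} {D e : ℝ} {m : ℕ} {P : Set ℝ} (hP : P ⊆ unitInterval)
    (hPm : MeasurableSet P) (hd : ContinuousOn d unitInterval) (hs : ContinuousOn s unitInterval)
    (hD : 0 ≤ D) (hdD : ∀ x ∈ unitInterval, d x ∈ Icc D 1) (hs₀ : ∀ x ∈ unitInterval, 0 ≤ s x)
    (hin : ∫ x in P, s x ≤ e) (hout : ∫ x in unitInterval \ P, (2 - s x) ≤ e)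
    (he : (m + D) * e < 2 * D * volume.real (unitInterval \ P)) :
    IsLight m (fun x => d x * s x) P := by
  have hsint : IntegrableOn s unitInterval := hs.integrableOn_compact isCompact_Icc
  have hdsint : IntegrableOn (fun x => d x * s x) unitInterval :=
    (hd.mul hs).integrableOn_compact isCompact_Icc
  have hPc : MeasurableSet (unitInterval \ P) := measurableSet_Icc.diff hPm
  have hinP : ∫ x in P, d x * s x ≤ e := by
    refine le_trans (setIntegral_mono_on (hdsint.mono_set hP) (hsint.mono_set hP) hPm ?_) hin
    exact fun x hx => mul_le_of_le_one_left (hs₀ x (hP hx)) (hdD x (hP hx)).2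
  have hall : ∫ x in unitInterval \ P, d x * s x ≤ ∫ x in unitInterval, d x * s x := by
    refine setIntegral_mono_set hdsint ?_ sdiff_subset.eventuallyLE
    rw [EventuallyLE, ae_restrict_iff' measurableSet_Icc]
    exact Eventually.of_forall fun x hx => mul_nonneg (hD.trans (hdD x hx).1) (hs₀ x hx)
  have hoff : D * ∫ x in unitInterval \ P, s x ≤ ∫ x in unitInterval \ P, d x * s x := by
    rw [← integral_const_mul]
    refine setIntegral_mono_on ((hsint.mono_set sdiff_subset).const_mul D)
      (hdsint.mono_set sdiff_subset) hPc fun x hx => ?_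
    exact mul_le_mul_of_nonneg_right (hdD x hx.1).1 (hs₀ x hx.1)
  have hlarge : 2 * volume.real (unitInterval \ P) - e ≤ ∫ x in unitInterval \ P, s x := by
    have htwo : IntegrableOn (fun _ : ℝ => (2 : ℝ)) unitInterval := integrableOn_const (by simp)
    rw [integral_sub (htwo.mono_set sdiff_subset) (hsint.mono_set sdiff_subset),
      setIntegral_const, smul_eq_mul] at hout
    linarith
  calc m * ∫ x in P, d x * s x ≤ m * e := by gcongr
    _ < D * (2 * volume.real (unitInterval \ P) - e) := by linarith
    _ ≤ D * ∫ x in unitInterval \ P, s x := by gcongr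
    _ ≤ _ := hoff.trans hall

lemma IsFol.exists_profile {C β a b : ℝ} {f fx : ℝ → ℝ → ℝ} {m N : ℕ} (hβ : 0 < β)
    (h : IsFol C β f fx) (hN : 0 < N) (hab : a ≤ b) (hJ : Icc a b ⊆ unitInterval)
    (hin : 0 < volume.real (Icc a b)) (hout : 0 < volume.real (unitInterval \ Icc a b)) :
    ∃ σ : ℝ → ℝ, ContDiff ℝ 1 σ ∧ σ 0 = 0 ∧ (∀ x, |σ x| < 1) ∧ ∀ k < N,
      IsLight m (fun x => cellIncr (f x) N k * (1 - σ x)) (Icc a b) ∧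
      IsLight m (fun x => cellIncr (f x) N k * (1 + σ x)) (unitInterval \ Icc a b) := by
  have hC := h.const_pos
  have : (0 : ℝ) < N := by exact_mod_cast hN
  set D := C⁻¹ * (1 / N : ℝ) ^ (1 / β)
  have hD : 0 < D := by positivity
  obtain ⟨e, he, hlt⟩ := exists_pos_mul_lt
    (lt_min (by positivity : 0 < 2 * D * volume.real (Icc a b))
      (by positivity : 0 < 2 * D * volume.real (unitInterval \ Icc a b))) (m + D)
  obtain ⟨heJ, heJc⟩ := lt_min_iff.1 hlt
  obtain ⟨σ, hσ, hσ₀, hσ₁, hσin, hσout⟩ := exists_contDiff_near_one_neg_one hab hJ he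
  refine ⟨σ, hσ, hσ₀, hσ₁, fun k hk => ?_⟩
  have hcell : ∀ x ∈ unitInterval, cellIncr (f x) N k ∈ Icc D 1 := fun x hx =>
    ⟨(h.biHolderMono hβ hx).le_cellIncr hk, (h.cellIncr_mem_unitInterval hβ hk hx).2⟩
  have hcont := h.continuousOn_cellIncr hk
  have htwo : ∀ t : ℝ, 2 - (1 - t) = 1 + t ∧ 2 - (1 + t) = 1 - t := fun t => by
    constructor <;> ring
  have hcompl : unitInterval \ (unitInterval \ Icc a b) = Icc a b :=
    sdiff_sdiff_cancel_left hJ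
  constructor
  · refine isLight_mul hJ measurableSet_Icc hcont
      (continuous_const.sub hσ.continuous).continuousOn hD.le hcell (fun x _ => ?_) hσin
      (by simpa only [htwo] using hσout) heJc
    linarith [(abs_lt.1 (hσ₁ x)).2]
  · refine isLight_mul sdiff_subset (measurableSet_Icc.diff measurableSet_Icc) hcont
      (continuous_const.add hσ.continuous).continuousOn hD.le hcell (fun x _ => ?_) hσout ?_ ?_
    · linarith [(abs_lt.1 (hσ₁ x)).1]
    · simpa only [htwo, hcompl] using hσin
    · simpa only [hcompl] using heJ

lemma isLight_cellIncr_oscillate {f : ℝ → ℝ → ℝ} {σ : ℝ → ℝ} {m N L i : ℕ} {P Q : Set ℝ}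
    (hlight : ∀ k < N, IsLight m (fun x => cellIncr (f x) N k * (1 - σ x)) P ∧
      IsLight m (fun x => cellIncr (f x) N k * (1 + σ x)) Q) (hi : i < N * (2 * L)) :
    IsLight m (fun x => cellIncr (oscillate N σ (triangleWave L) f x) (N * (2 * L)) i) P ∨
      IsLight m (fun x => cellIncr (oscillate N σ (triangleWave L) f x) (N * (2 * L)) i) Q := by
  have hL : 0 < 2 * L := Nat.pos_of_mul_pos_left hi.pos
  have hscale : (0 : ℝ) < 1 / (2 * L : ℕ) := by positivity
  have hk : i / (2 * L) < N := Nat.div_lt_of_lt_mul (by rwa [mul_comm])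
  simp only [cellIncr_oscillate σ f _ hi]
  split_ifs
  · exact Or.inr ((hlight _ hk).2.const_mul hscale)
  · exact Or.inl ((hlight _ hk).1.const_mul hscale)

lemma tendsto_one_half_div_two_pow :
    Tendsto (fun M : ℕ => 1 / 2 / ((2 ^ M : ℕ) : ℝ)) atTop (𝓝 0) :=
  tendsto_const_nhds.div_atTop
    (tendsto_natCast_atTop_atTop.comp (tendsto_pow_atTop_atTop_of_one_lt one_lt_two))

lemma IsFol.exists_modulus_two_pow {C β δ : ℝ} {f fx : ℝ → ℝ → ℝ} (h : IsFol C β f fx)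
    (hδ : 0 < δ) : ∃ N₀ : ℕ, ∀ x ∈ unitInterval, ∀ y ∈ unitInterval, ∀ z ∈ unitInterval,
      |z - y| ≤ 1 / ((2 ^ N₀ : ℕ) : ℝ) → |fx x z - fx x y| ≤ δ := by
  have hunif := (isCompact_Icc.prod isCompact_Icc).uniformContinuousOn_of_continuous h.derivCont
  obtain ⟨η, hη, hclose⟩ := Metric.uniformContinuousOn_iff_le.1 hunif δ hδ
  obtain ⟨N₀, hN₀⟩ := exists_pow_lt_of_lt_one hη (one_half_lt_one (α := ℝ))
  refine ⟨N₀, fun x hx y hy z hz hzy => ?_⟩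
  refine hclose (x, z) ⟨hx, hz⟩ (x, y) ⟨hx, hy⟩ ?_
  rw [Prod.dist_eq, dist_self, max_eq_right dist_nonneg, Real.dist_eq]
  refine hzy.trans ?_
  rw [Nat.cast_pow, Nat.cast_ofNat, ← one_div_pow]
  exact hN₀.le

lemma exists_mem_Bset_abs_deriv_sub_le {C β a b δ : ℝ} {m : ℕ} (hC : 1 < C) (hβ₀ : 0 < β)
    (hβ₁ : β < 1) (hm : 0 < m) (hab : a ≤ b) (hJ : Icc a b ⊆ unitInterval)
    (hin : 0 < volume.real (Icc a b)) (hout : 0 < volume.real (unitInterval \ Icc a b))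
    (F : Fol C β) (hδ : 0 < δ) :
    ∃ G ∈ Bset C β m a b, ∀ x ∈ unitInterval, ∀ y ∈ unitInterval, |G.fx x y - F.fx x y| ≤ δ := by
  obtain ⟨C₁, hC₁, g, gx, hg, hgF⟩ := F.isFol.exists_slack hβ₀ hβ₁.le hC (half_pos hδ)
  obtain ⟨N₀, hmod⟩ := hg.exists_modulus_two_pow (by positivity : 0 < δ / 4)
  have hN : 0 < 2 ^ N₀ := by positivity
  obtain ⟨σ, hσ, hσ₀, hσ₁, hlight⟩ := hg.exists_profile (m := m) hβ₀ hN hab hJ hin hout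
  have hfol := hg.eventually_isFol_oscillate hβ₀ hβ₁ hC₁ hN hσ hσ₀ fun x _ => hσ₁ x
  have hclose := hg.eventually_abs_oscillateDeriv_sub_le hβ₀ hN hσ (fun x _ => (hσ₁ x).le) hmod
    (by linarith : δ / 4 < δ / 2)
  obtain ⟨M, hfolM, hcloseM⟩ :=
    (tendsto_one_half_div_two_pow.eventually (hfol.and hclose)).exists
  have hwave : ∀ s ∈ unitInterval, |triangleWave (2 ^ M) s| ≤ 1 / 2 / ((2 ^ M : ℕ) : ℝ) :=
    fun s _ => abs_triangleWave_le _ s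
  have hw₀ := triangleWave_zero (2 ^ M)
  have hw₁ := triangleWave_one (2 ^ M)
  refine ⟨⟨_, _, hfolM _ (lipschitzWith_triangleWave (by positivity)) hw₀ hw₁ hwave⟩,
    mem_iUnion.2 ⟨N₀ + (M + 1), ?_⟩, fun x hx y hy => ?_⟩
  · rw [mem_Aset_iff_isLight hβ₀ hm hJ, pow_add, pow_succ']
    exact fun i hi => isLight_cellIncr_oscillate hlight hi
  · linarith [abs_sub_le (oscillateDeriv (2 ^ N₀) σ (triangleWave (2 ^ M)) g gx x y) (gx x y)
      (F.fx x y), hcloseM _ hw₀ hw₁ hwave x hx y hy, hgF x hx y hy]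

lemma mem_Bset_of_volume_eq_zero {C β a b : ℝ} {m : ℕ} (hβ : 0 < β) (hm : 0 < m)
    (hJ : Icc a b ⊆ unitInterval)
    (hnull : volume (Icc a b) = 0 ∨ volume (unitInterval \ Icc a b) = 0) (F : Fol C β) :
    F ∈ Bset C β m a b := by
  refine mem_iUnion.2 ⟨0, (mem_Aset_iff_isLight hβ hm hJ F).2 fun i hi => ?_⟩
  have hpos := integral_cellIncr_pos hβ F.isFol hi
  exact hnull.imp (.of_volume_eq_zero · hpos) (.of_volume_eq_zero · hpos)

lemma isDenseWrt_Bset {C β α a b : ℝ} {m : ℕ} (hC : 1 < C) (hα : 0 ≤ α) (hαβ : α < β)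
    (hβ : β < 1) (hm : 0 < m) (hab : a ≤ b) (hJ : Icc a b ⊆ unitInterval) :
    IsDenseWrt (fun F G : Fol C β => dalphaF α F G) (Bset C β m a b) := by
  have hβ₀ : 0 < β := hα.trans_lt hαβ
  intro F ε hε
  obtain ⟨δ, hδ, hdist⟩ := exists_dalphaF_lt C hα hαβ hε
  by_cases hnull : volume (Icc a b) = 0 ∨ volume (unitInterval \ Icc a b) = 0
  · refine ⟨F, mem_Bset_of_volume_eq_zero hβ₀ hm hJ hnull F, hdist F F fun x _ y _ => ?_⟩
    rw [sub_self, abs_zero]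
    exact hδ.le
  · rw [not_or] at hnull
    have hfin : ∀ P ⊆ unitInterval, volume P ≠ ∞ := fun P hP =>
      ((measure_mono hP).trans_lt isCompact_Icc.measure_lt_top).ne
    obtain ⟨G, hG, hGF⟩ := exists_mem_Bset_abs_deriv_sub_le hC hβ₀ hβ hm hab hJ
      (ENNReal.toReal_pos hnull.1 (hfin _ hJ)) (ENNReal.toReal_pos hnull.2 (hfin _ sdiff_subset))
      F hδ
    exact ⟨G, hG, hdist G F hGF⟩

theorem stmt10_general (C β α : ℝ) (hC : 1 < C) (hα : 0 ≤ α) (hαβ : α < β) (hβ : β < 1)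
    (m : ℕ) (hm : 1 ≤ m) (b₁ b₂ : ℝ) (hb₁ : 0 ≤ b₁) (hb : b₁ ≤ b₂) (hb₂ : b₂ ≤ 1) :
    IsOpenWrt (fun F G : Fol C β => dalphaF α F G) (Bset C β m b₁ b₂) ∧
    IsDenseWrt (fun F G : Fol C β => dalphaF α F G) (Bset C β m b₁ b₂) := by
  have hJ : Icc b₁ b₂ ⊆ unitInterval := Icc_subset_Icc hb₁ hb₂
  exact ⟨.iUnion fun n => isOpenWrt_Aset α n (hα.trans_lt hαβ) hm hJ,
    isDenseWrt_Bset hC hα hαβ hβ hm hb hJ⟩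

/-- For every `m ≥ 1` and every closed interval `I = [b₁,b₂] ⊆ [0,1]` with
rational endpoints, the set `B_{m,I} = ⋃ₙ A_{n,m,I}` is open and dense in `(F_(C,β), d_α)`. -/
theorem stmt10 (C β α : ℝ) (hC : 1 < C) (hα : 0 ≤ α) (hαβ : α < β) (hβ : β < 1)
    (m : ℕ) (hm : 1 ≤ m) (b₁ b₂ : ℚ)
    (hb₁ : 0 ≤ b₁) (hb : b₁ ≤ b₂) (hb₂ : b₂ ≤ 1) :
    IsOpenWrt (fun F G : Fol C β => dalphaF α F G) (Bset C β m (b₁ : ℝ) (b₂ : ℝ)) ∧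
    IsDenseWrt (fun F G : Fol C β => dalphaF α F G) (Bset C β m (b₁ : ℝ) (b₂ : ℝ)) :=
  stmt10_general C β α hC hα hαβ hβ m hm b₁ b₂ (by exact_mod_cast hb₁) (by exact_mod_cast hb)
    (by exact_mod_cast hb₂)

end
end

section
/- Let 0<β<1, C>1 and r>0. Let g : (−r, 1+r) → ℝ be monotone increasing and satisfy C^{-1}|y₂−y₁|^{1/β} ≤ |g(y₂)−g(y₁)| ≤ C|y₂−y₁|^β for all y₁,y₂ ∈ (−r,1+r). Let φ : ℝ → [0,∞) be continuous, vanishing outside (−r,r), with ∫_ℝ φ(t)dt = 1, and define g₂(y) = ∫_{−r}^{r} g(y−t)φ(t)dt for y ∈ [0,1]. Then: (a) C^{-1}|y₂−y₁|^{1/β} ≤ |g₂(y₂)−g₂(y₁)| ≤ C|y₂−y₁|^β for all y₁,y₂ ∈ [0,1]; and (b) |g₂(y)−g(y)| ≤ C r^β for all y ∈ [0,1]. -/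
open MeasureTheory Set Filter Topology
open scoped ENNReal

noncomputable section

/-- The function `g` is `(C,β)`-bi-Hölder on `s`. The paper's restriction to `y₁ ≠ y₂` is dropped:
for `β ≠ 0` both sides of each bound vanish on the diagonal. -/
def BiHolderOn (C β : ℝ) (g : ℝ → ℝ) (s : Set ℝ) : Prop :=
  ∀ y₁ ∈ s, ∀ y₂ ∈ s,
    C⁻¹ * |y₂ - y₁| ^ (1 / β) ≤ |g y₂ - g y₁| ∧ |g y₂ - g y₁| ≤ C * |y₂ - y₁| ^ β

section Averages

variable {C β r a b y : ℝ} {g : ℝ → ℝ} {s t : Set ℝ} {μ : Measure ℝ}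

theorem biHolderOn_neg : BiHolderOn C β (-g) s ↔ BiHolderOn C β g s := by
  have habs (u v : ℝ) : |-g u - -g v| = |g u - g v| := by rw [neg_sub_neg, abs_sub_comm]
  simp only [BiHolderOn, Pi.neg_apply, habs]

theorem biHolderOn_iff_of_monotoneOn (hmono : MonotoneOn g s) :
    BiHolderOn C β g s ↔ ∀ y₁ ∈ s, ∀ y₂ ∈ s, y₁ ≤ y₂ →
      g y₂ - g y₁ ∈ Icc (C⁻¹ * (y₂ - y₁) ^ (1 / β)) (C * (y₂ - y₁) ^ β) := by
  refine ⟨fun hg y₁ h₁ y₂ h₂ hle ↦ ?_, fun hg y₁ h₁ y₂ h₂ ↦ ?_⟩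
  · have hbounds := hg y₁ h₁ y₂ h₂
    rwa [abs_of_nonneg (sub_nonneg.2 hle), abs_of_nonneg (sub_nonneg.2 (hmono h₁ h₂ hle))]
      at hbounds
  · wlog hle : y₁ ≤ y₂ generalizing y₁ y₂
    · rw [abs_sub_comm y₂, abs_sub_comm (g y₂)]
      exact this y₂ h₂ y₁ h₁ (le_of_not_ge hle)
    rw [abs_of_nonneg (sub_nonneg.2 hle), abs_of_nonneg (sub_nonneg.2 (hmono h₁ h₂ hle))]
    exact hg y₁ h₁ y₂ h₂ hle

namespace BiHolderOn

theorem continuousOn (hg : BiHolderOn C β g s) (hβ : 0 < β) : ContinuousOn g s := by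
  intro x hx
  have hmajorant : Tendsto (fun z ↦ C * |z - x| ^ β) (𝓝[s] x) (𝓝 0) := by
    have hcont : Continuous fun z ↦ C * |z - x| ^ β := by fun_prop (disch := exact hβ.le)
    simpa [Real.zero_rpow hβ.ne'] using hcont.continuousWithinAt (s := s) (x := x) |>.tendsto
  rw [ContinuousWithinAt, tendsto_iff_dist_tendsto_zero]
  refine squeeze_zero' (.of_forall fun _ ↦ dist_nonneg) ?_ hmajorant
  filter_upwards [self_mem_nhdsWithin] with z hz using (hg x hx z hz).2

theorem injOn (hg : BiHolderOn C β g s) (hC : 0 < C) : InjOn g s := by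
  intro y₁ h₁ y₂ h₂ heq
  by_contra hne
  have hdist : 0 < |y₂ - y₁| := abs_pos.2 (sub_ne_zero.2 (Ne.symm hne))
  have hlower := (hg y₁ h₁ y₂ h₂).1
  rw [heq, sub_self, abs_zero] at hlower
  exact hlower.not_gt (mul_pos (inv_pos.2 hC) (Real.rpow_pos_of_pos hdist _))

theorem strictMonoOn_or_strictAntiOn (hg : BiHolderOn C β g (Ioo a b)) (hC : 0 < C) (hβ : 0 < β) :
    StrictMonoOn g (Ioo a b) ∨ StrictAntiOn g (Ioo a b) := by
  rcases lt_or_ge a b with hab | hba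
  · exact (hg.continuousOn hβ).strictMonoOn_of_injOn_Ioo hab (hg.injOn hC)
  · simp [Ioo_eq_empty hba.not_gt, StrictMonoOn]

theorem ae_comp_sub_mem_closedBall (hg : BiHolderOn C β g s) (hC : 0 ≤ C) (hβ : 0 ≤ β)
    (hy : y ∈ s) (hμs : ∀ᵐ x ∂μ, y - x ∈ s) (hμr : ∀ᵐ x ∂μ, |x| ≤ r) :
    ∀ᵐ x ∂μ, g (y - x) ∈ Metric.closedBall (g y) (C * r ^ β) := by
  filter_upwards [hμs, hμr] with x hxs hxr
  calc |g (y - x) - g y| ≤ C * |y - x - y| ^ β := (hg y hy _ hxs).2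
    _ = C * |x| ^ β := by rw [sub_sub_cancel_left, abs_neg]
    _ ≤ C * r ^ β := by gcongr

theorem integrable_comp_sub [IsFiniteMeasure μ] (hg : BiHolderOn C β g s) (hs : MeasurableSet s)
    (hC : 0 ≤ C) (hβ : 0 < β) (hy : y ∈ s) (hμs : ∀ᵐ x ∂μ, y - x ∈ s) (hμr : ∀ᵐ x ∂μ, |x| ≤ r) :
    Integrable (fun x ↦ g (y - x)) μ := by
  have hmeas : AEMeasurable (fun x ↦ g (y - x)) μ := by
    have hpre : MeasurableSet ((y - ·) ⁻¹' s) := measurableSet_preimage (by fun_prop) hs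
    have hcont : ContinuousOn (fun x ↦ g (y - x)) ((y - ·) ⁻¹' s) :=
      (hg.continuousOn hβ).comp (by fun_prop) (mapsTo_preimage _ s)
    have hμpre : ∀ᵐ x ∂μ, x ∈ (y - ·) ⁻¹' s := hμs
    simpa only [Measure.restrict_eq_self_of_ae_mem hμpre] using hcont.aemeasurable (μ := μ) hpre
  refine .of_mem_Icc (g y - C * r ^ β) (g y + C * r ^ β) hmeas ?_
  simpa only [Real.closedBall_eq_Icc] using hg.ae_comp_sub_mem_closedBall hC hβ.le hy hμs hμr

theorem abs_integral_comp_sub_sub_le [IsProbabilityMeasure μ] (hg : BiHolderOn C β g s)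
    (hs : MeasurableSet s) (hC : 0 ≤ C) (hβ : 0 < β) (hy : y ∈ s) (hμs : ∀ᵐ x ∂μ, y - x ∈ s)
    (hμr : ∀ᵐ x ∂μ, |x| ≤ r) :
    |∫ x, g (y - x) ∂μ - g y| ≤ C * r ^ β :=
  (convex_closedBall _ _).integral_mem Metric.isClosed_closedBall
    (hg.ae_comp_sub_mem_closedBall hC hβ.le hy hμs hμr)
    (hg.integrable_comp_sub hs hC hβ hy hμs hμr)

end BiHolderOn

theorem monotoneOn_integral_comp_sub (hmono : MonotoneOn g s)
    (hμs : ∀ y ∈ t, ∀ᵐ x ∂μ, y - x ∈ s) (hint : ∀ y ∈ t, Integrable (fun x ↦ g (y - x)) μ) :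
    MonotoneOn (fun y ↦ ∫ x, g (y - x) ∂μ) t := by
  intro y₁ h₁ y₂ h₂ hle
  refine integral_mono_ae (hint y₁ h₁) (hint y₂ h₂) ?_
  filter_upwards [hμs y₁ h₁, hμs y₂ h₂] with x hx₁ hx₂
  exact hmono hx₁ hx₂ (sub_le_sub_right hle x)

namespace BiHolderOn

-- The translates `y₁ - x` and `y₂ - x` are at distance `|y₂ - y₁|` for every `x`, and by
-- monotonicity the increments all have the same sign, so averaging them loses neither bound.
theorem integral_comp_sub_of_monotoneOn [IsProbabilityMeasure μ] (hg : BiHolderOn C β g s)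
    (hmono : MonotoneOn g s) (hμs : ∀ y ∈ t, ∀ᵐ x ∂μ, y - x ∈ s)
    (hint : ∀ y ∈ t, Integrable (fun x ↦ g (y - x)) μ) :
    BiHolderOn C β (fun y ↦ ∫ x, g (y - x) ∂μ) t := by
  rw [biHolderOn_iff_of_monotoneOn (monotoneOn_integral_comp_sub hmono hμs hint)]
  intro y₁ h₁ y₂ h₂ hle
  rw [← integral_sub (hint y₂ h₂) (hint y₁ h₁)]
  refine (convex_Icc _ _).integral_mem isClosed_Icc ?_ ((hint y₂ h₂).sub (hint y₁ h₁))
  filter_upwards [hμs y₁ h₁, hμs y₂ h₂] with x hx₁ hx₂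
  simpa only [sub_sub_sub_cancel_right] using
    (biHolderOn_iff_of_monotoneOn hmono).1 hg _ hx₁ _ hx₂ (sub_le_sub_right hle x)

theorem integral_comp_sub [IsProbabilityMeasure μ] (hg : BiHolderOn C β g (Ioo a b)) (hC : 0 < C)
    (hβ : 0 < β) (hμs : ∀ y ∈ t, ∀ᵐ x ∂μ, y - x ∈ Ioo a b)
    (hint : ∀ y ∈ t, Integrable (fun x ↦ g (y - x)) μ) :
    BiHolderOn C β (fun y ↦ ∫ x, g (y - x) ∂μ) t := by
  rcases hg.strictMonoOn_or_strictAntiOn hC hβ with hmono | hanti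
  · exact hg.integral_comp_sub_of_monotoneOn hmono.monotoneOn hμs hint
  · have hneg := (biHolderOn_neg.2 hg).integral_comp_sub_of_monotoneOn hanti.antitoneOn.neg hμs
      fun y hy ↦ (hint y hy).neg
    simp only [Pi.neg_apply, integral_neg] at hneg
    exact biHolderOn_neg.1 hneg

end BiHolderOn

end Averages

section Density

variable {α : Type*} [MeasurableSpace α] {ν : Measure α} {φ : α → ℝ}

theorem isProbabilityMeasure_withDensity_ofReal (hφ0 : 0 ≤ᵐ[ν] φ) (hφint : ∫ x, φ x ∂ν = 1) :
    IsProbabilityMeasure (ν.withDensity fun x ↦ ENNReal.ofReal (φ x)) := by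
  have hφ : Integrable φ ν := .of_integral_ne_zero (by simp [hφint])
  constructor
  rw [withDensity_apply _ .univ, Measure.restrict_univ,
    ← ofReal_integral_eq_lintegral_ofReal hφ hφ0, hφint, ENNReal.ofReal_one]

theorem integral_withDensity_ofReal (hφ : AEMeasurable φ ν) (hφ0 : 0 ≤ᵐ[ν] φ) (f : α → ℝ) :
    ∫ x, f x ∂ν.withDensity (fun x ↦ ENNReal.ofReal (φ x)) = ∫ x, f x * φ x ∂ν := by
  rw [integral_withDensity_eq_integral_toReal_smul₀ hφ.ennreal_ofReal (by simp)]
  refine integral_congr_ae ?_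
  filter_upwards [hφ0] with x hx
  rw [ENNReal.toReal_ofReal hx, smul_eq_mul, mul_comm]

theorem ae_mem_withDensity_ofReal {s : Set α} (hφ : AEMeasurable φ ν) (hs : ∀ x ∉ s, φ x = 0) :
    ∀ᵐ x ∂ν.withDensity (fun x ↦ ENNReal.ofReal (φ x)), x ∈ s := by
  rw [ae_withDensity_iff' hφ.ennreal_ofReal]
  refine .of_forall fun x hx ↦ not_not.1 fun hxs ↦ hx ?_
  rw [hs x hxs, ENNReal.ofReal_zero]

end Density

theorem stmt12_general {C β r a b : ℝ} (hC : 0 < C) (hβ : 0 < β) (hr : 0 < r) {g φ : ℝ → ℝ}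
    (hg : BiHolderOn C β g (Ioo (a - r) (b + r))) (hφ0 : ∀ t, 0 ≤ φ t)
    (hφsupp : ∀ t ∉ Ioo (-r) r, φ t = 0) (hφint : ∫ t, φ t = 1) :
    BiHolderOn C β (fun y ↦ ∫ t in (-r)..r, g (y - t) * φ t) (Icc a b) ∧
      ∀ y ∈ Icc a b, |(∫ t in (-r)..r, g (y - t) * φ t) - g y| ≤ C * r ^ β := by
  have hφ : AEMeasurable φ := (Integrable.of_integral_ne_zero (by simp [hφint])).aemeasurable
  set μ : Measure ℝ := volume.withDensity fun t ↦ ENNReal.ofReal (φ t)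
  have : IsProbabilityMeasure μ := isProbabilityMeasure_withDensity_ofReal (.of_forall hφ0) hφint
  have hμ : ∀ᵐ t ∂μ, t ∈ Ioo (-r) r := ae_mem_withDensity_ofReal hφ hφsupp
  have hμr : ∀ᵐ t ∂μ, |t| ≤ r := hμ.mono fun t ht ↦ (abs_lt.2 ht).le
  have hμs : ∀ y ∈ Icc a b, ∀ᵐ t ∂μ, y - t ∈ Ioo (a - r) (b + r) := fun y hy ↦
    hμ.mono fun t ht ↦ ⟨by linarith [hy.1, ht.2], by linarith [hy.2, ht.1]⟩
  have hsub : Icc a b ⊆ Ioo (a - r) (b + r) :=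
    Icc_subset_Ioo (sub_lt_self a hr) (lt_add_of_pos_right b hr)
  have hmollify (y : ℝ) : ∫ t in (-r)..r, g (y - t) * φ t = ∫ t, g (y - t) ∂μ := by
    rw [integral_withDensity_ofReal hφ (.of_forall hφ0)]
    refine intervalIntegral.integral_eq_integral_of_support_subset fun t ht ↦ ?_
    exact Ioo_subset_Ioc_self (not_not.1 fun hts ↦ ht (by simp [hφsupp t hts]))
  simp only [hmollify]
  exact ⟨hg.integral_comp_sub hC hβ hμs fun y hy ↦
      hg.integrable_comp_sub measurableSet_Ioo hC.le hβ (hsub hy) (hμs y hy) hμr,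
    fun y hy ↦ hg.abs_integral_comp_sub_sub_le measurableSet_Ioo hC.le hβ (hsub hy) (hμs y hy) hμr⟩

/-- Mollifying a monotone `(C,β)`-bi-Hölder function `g` on `(−r, 1+r)` by
convolution with a continuous probability bump function `φ` supported in `(−r,r)` yields
`g₂(y) = ∫_{−r}^{r} g(y−t)φ(t) dt` which (a) is again `(C,β)`-bi-Hölder on `[0,1]`, and
(b) satisfies `|g₂(y) − g(y)| ≤ C r^β` on `[0,1]`. -/
theorem stmt12 (C β r : ℝ) (hC : 1 < C) (hβ0 : 0 < β) (hβ : β < 1) (hr : 0 < r)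
    (g : ℝ → ℝ) (hmono : MonotoneOn g (Ioo (-r) (1 + r)))
    (hlow : ∀ y₁ ∈ Ioo (-r) (1 + r), ∀ y₂ ∈ Ioo (-r) (1 + r),
      C⁻¹ * |y₂ - y₁| ^ (1 / β) ≤ |g y₂ - g y₁|)
    (hupp : ∀ y₁ ∈ Ioo (-r) (1 + r), ∀ y₂ ∈ Ioo (-r) (1 + r),
      |g y₂ - g y₁| ≤ C * |y₂ - y₁| ^ β)
    (φ : ℝ → ℝ) (hφc : Continuous φ) (hφ0 : ∀ t, 0 ≤ φ t)
    (hφsupp : ∀ t ∉ Ioo (-r) r, φ t = 0)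
    (hφint : ∫ t, φ t = 1)
    (g₂ : ℝ → ℝ) (hg₂ : ∀ y, g₂ y = ∫ t in (-r)..r, g (y - t) * φ t) :
    (∀ y₁ ∈ unitInterval, ∀ y₂ ∈ unitInterval,
      C⁻¹ * |y₂ - y₁| ^ (1 / β) ≤ |g₂ y₂ - g₂ y₁| ∧
      |g₂ y₂ - g₂ y₁| ≤ C * |y₂ - y₁| ^ β) ∧
    (∀ y ∈ unitInterval, |g₂ y - g y| ≤ C * r ^ β) := by
  obtain rfl : g₂ = fun y ↦ ∫ t in (-r)..r, g (y - t) * φ t := funext hg₂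
  exact stmt12_general (a := 0) (b := 1) (by linarith) hβ0 hr
    (by rw [zero_sub]; exact fun y₁ h₁ y₂ h₂ ↦ ⟨hlow y₁ h₁ y₂ h₂, hupp y₁ h₁ y₂ h₂⟩)
    hφ0 hφsupp hφint

end
end
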